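/- arXiv:1007.4455 — 3 statements merged into one kernel-verified Lean document; each statement's English description precedes it below -/
import Mathlib

section
/- Let A generate an α-times resolvent family {S_α(t)}_{t≥0} on X, where 1 < α < 2, let r > 0, let f : [0,r] → X be continuous and x, y ∈ D(A). If the fractional Cauchy problem D_t^α u = Au + f on [0,r], u(0) = x, u'(0) = y has a strong solution, then the function t ↦ (S_α*f)(t) = ∫_0^t S_α(t−s)f(s) ds is continuously differentiable on [0,r]. -/
open MeasureTheory Set

/-- `g β t = t^(β-1)/Γ(β)`. -/
noncomputable def g (β t : ℝ) : ℝ := t ^ (β - 1) / Real.Gamma β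

/-- `Pa α S t x = (g_{α-1} * S)(t) x = ∫_0^t g_{α-1}(t-s) S(s) x ds`. -/
noncomputable def Pa {X : Type*} [NormedAddCommGroup X] [NormedSpace ℂ X]
    (α : ℝ) (S : ℝ → X →L[ℂ] X) (t : ℝ) (x : X) : X :=
  ∫ s in (0:ℝ)..t, g (α - 1) (t - s) • S s x

/-- `u` is a strong solution of `D_t^α u = A u + f` on `[0, r]`, `u 0 = x`, `u' 0 = y`:
`u` takes values in `D(A)` with `t ↦ A u t` continuous (encoded via the graph of `A`),
`u` is continuously differentiable on `[0, r]`,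
`w t = ∫_0^t g_{2-α}(t-s) (u s - x - s y) ds` is twice continuously differentiable
on `[0, r]`, and `w'' t = A (u t) + f t` there. -/
def IsStrongSolution {X : Type*} [NormedAddCommGroup X] [NormedSpace ℂ X]
    (α : ℝ) (A : X →ₗ.[ℂ] X) (r : ℝ) (f : ℝ → X) (x y : X) (u : ℝ → X) : Prop :=
  ∃ Au u' w' w'' : ℝ → X,
    ContinuousOn u (Set.Icc 0 r) ∧
    (∀ t ∈ Set.Icc (0:ℝ) r, (u t, Au t) ∈ A.graph) ∧
    ContinuousOn Au (Set.Icc 0 r) ∧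
    (∀ t ∈ Set.Icc (0:ℝ) r, HasDerivWithinAt u (u' t) (Set.Icc 0 r) t) ∧
    ContinuousOn u' (Set.Icc 0 r) ∧
    (∀ t ∈ Set.Icc (0:ℝ) r,
      HasDerivWithinAt (fun τ => ∫ s in (0:ℝ)..τ, g (2 - α) (τ - s) • (u s - x - s • y))
        (w' t) (Set.Icc 0 r) t) ∧
    (∀ t ∈ Set.Icc (0:ℝ) r, HasDerivWithinAt w' (w'' t) (Set.Icc 0 r) t) ∧
    ContinuousOn w'' (Set.Icc 0 r) ∧
    (∀ t ∈ Set.Icc (0:ℝ) r, w'' t = Au t + f t) ∧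
    u 0 = x ∧ u' 0 = y


open Filter Topology

lemma g_nonneg {b t : ℝ} (hb : 0 < b) (ht : 0 ≤ t) : 0 ≤ g b t :=
  div_nonneg (Real.rpow_nonneg ht _) (Real.Gamma_pos_of_pos hb).le

lemma g_one (t : ℝ) : g 1 t = 1 := by simp [g]

lemma g_two (t : ℝ) : g 2 t = t := by
  have h : (2:ℝ) - 1 = 1 := by norm_num
  simp [g, h]

lemma g_cont {a : ℝ} (ha : 1 ≤ a) : Continuous (g a) := by
  unfold g
  exact (Real.continuous_rpow_const (by linarith)).div_const _

lemma g_meas (a : ℝ) : Measurable (g a) := by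
  unfold g
  fun_prop

lemma g_beta {a b s t : ℝ} (ha : 0 < a) (hb : 0 < b) (hst : s < t) :
    ∫ τ in s..t, g a (t - τ) * g b (τ - s) = g (a + b) (t - s) := by
  have h0 : 0 < t - s := by linarith
  have h1 := intervalIntegral.integral_comp_sub_right (a := s) (b := t)
    (fun x => g a (t - s - x) * g b x) s
  have e : (fun x => g a (t - s - (x - s)) * g b (x - s))
      = fun τ => g a (t - τ) * g b (τ - s) := by
    funext x; congr 2; ring
  rw [e, sub_self] at h1
  rw [h1]
  have h2 := Complex.betaIntegral_scaled (b : ℂ) (a : ℂ) h0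
  have h3 := Complex.Gamma_mul_Gamma_eq_betaIntegral (s := (b:ℂ)) (t := (a:ℂ)) (by simpa) (by simpa)
  have h4 : ∫ x in (0:ℝ)..(t - s), (x : ℂ) ^ ((b:ℂ) - 1) * (((t - s : ℝ) : ℂ) - x) ^ ((a:ℂ) - 1)
      = ((∫ x in (0:ℝ)..(t - s), x ^ (b - 1) * (t - s - x) ^ (a - 1) : ℝ) : ℂ) := by
    rw [← intervalIntegral.integral_ofReal]
    refine intervalIntegral.integral_congr ?_
    intro x hx
    rw [uIcc_of_le h0.le] at hx
    have q1 : 0 ≤ t - s - x := by linarith [hx.2]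
    simp only
    rw [Complex.ofReal_mul, Complex.ofReal_cpow hx.1, Complex.ofReal_cpow q1]
    push_cast
    rfl
  rw [h4] at h2
  have hGa := (Real.Gamma_pos_of_pos ha)
  have hGb := (Real.Gamma_pos_of_pos hb)
  have hGab := (Real.Gamma_pos_of_pos (add_pos ha hb))
  have h5 : Real.Gamma b * Real.Gamma a * (t - s) ^ (a + b - 1) =
      Real.Gamma (a + b) * ∫ x in (0:ℝ)..(t - s), x ^ (b - 1) * (t - s - x) ^ (a - 1) := by
    apply Complex.ofReal_injective
    push_cast
    rw [← Complex.Gamma_ofReal, ← Complex.Gamma_ofReal, ← Complex.Gamma_ofReal, h3]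
    rw [← intervalIntegral.integral_ofReal] at h2 ⊢
    push_cast at h2 ⊢
    rw [h2, Complex.ofReal_cpow h0.le]
    push_cast
    rw [add_comm (b:ℂ) a]
    ring
  have h6 : ∫ x in (0:ℝ)..(t - s), g a (t - s - x) * g b x
      = (∫ x in (0:ℝ)..(t - s), x ^ (b - 1) * (t - s - x) ^ (a - 1)) *
        (Real.Gamma a * Real.Gamma b)⁻¹ := by
    rw [← intervalIntegral.integral_mul_const]
    congr 1
    funext x
    simp only [g]
    field_simp
  rw [h6]
  simp only [g]
  field_simp
  linarith

section
variable {X : Type*} [NormedAddCommGroup X] [NormedSpace ℝ X]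

def Tri (t : ℝ) : Set (ℝ × ℝ) := {p | 0 < p.2 ∧ p.2 ≤ p.1 ∧ p.1 ≤ t}

lemma Tri_meas (t : ℝ) : MeasurableSet (Tri t) := by
  apply MeasurableSet.inter (measurableSet_lt measurable_const measurable_snd)
  exact (measurableSet_le measurable_snd measurable_fst).inter
    (measurableSet_le measurable_fst measurable_const)

lemma Tri_fst (G : ℝ → ℝ → X) (t τ : ℝ) :
    (fun s => (Tri t).indicator (Function.uncurry G) (τ, s))
    = fun s => (Ioc 0 t).indicator (fun τ => (Ioc 0 τ).indicator (G τ) s) τ := by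
  funext s
  by_cases h : (τ, s) ∈ Tri t
  · have h' := h
    obtain ⟨h1, h2, h3⟩ := h'
    simp only at h1 h2 h3
    rw [indicator_of_mem h, indicator_of_mem (show τ ∈ Ioc 0 t from ⟨by linarith, h3⟩), indicator_of_mem (show s ∈ Ioc 0 τ from ⟨h1, h2⟩)]
    rfl
  · rw [indicator_of_notMem h]
    by_cases h1 : τ ∈ Ioc 0 t
    · rw [indicator_of_mem h1, indicator_of_notMem]
      intro h2
      exact h ⟨h2.1, h2.2, h1.2⟩
    · rw [indicator_of_notMem h1]

lemma Tri_snd (G : ℝ → ℝ → X) (t s : ℝ) :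
    (fun τ => (Tri t).indicator (Function.uncurry G) (τ, s))
    = fun τ => (Ioc 0 t).indicator (fun s => (Icc s t).indicator (fun τ => G τ s) τ) s := by
  funext τ
  by_cases h : (τ, s) ∈ Tri t
  · have h' := h
    obtain ⟨h1, h2, h3⟩ := h'
    simp only at h1 h2 h3
    rw [indicator_of_mem h, indicator_of_mem (show s ∈ Ioc 0 t from ⟨h1, by linarith⟩), indicator_of_mem (show τ ∈ Icc s t from ⟨h2, h3⟩)]
    rfl
  · rw [indicator_of_notMem h]
    by_cases h1 : s ∈ Ioc 0 t
    · rw [indicator_of_mem h1, indicator_of_notMem]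
      intro h2
      exact h ⟨h1.1, h2.1, h2.2⟩
    · rw [indicator_of_notMem h1]

lemma Tri_int_snd (G : ℝ → ℝ → X) (t s : ℝ) :
    ∫ τ, (Tri t).indicator (Function.uncurry G) (τ, s)
     = (Ioc 0 t).indicator (fun s => ∫ τ in s..t, G τ s) s := by
  rw [Tri_snd]
  by_cases h1 : s ∈ Ioc 0 t
  · simp only [indicator_of_mem h1]
    rw [integral_indicator measurableSet_Icc, integral_Icc_eq_integral_Ioc,
      intervalIntegral.integral_of_le h1.2]
  · simp [indicator_of_notMem h1]

lemma Tri_int_fst (G : ℝ → ℝ → X) (t τ : ℝ) :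
    ∫ s, (Tri t).indicator (Function.uncurry G) (τ, s)
     = (Ioc 0 t).indicator (fun τ => ∫ s in (0:ℝ)..τ, G τ s) τ := by
  rw [Tri_fst]
  by_cases h1 : τ ∈ Ioc 0 t
  · simp only [indicator_of_mem h1]
    rw [integral_indicator measurableSet_Ioc,
      intervalIntegral.integral_of_le h1.1.le]
  · simp [indicator_of_notMem h1]

lemma tri_fubini (G : ℝ → ℝ → X) {t : ℝ} (ht : 0 ≤ t)
    (hG : Integrable ((Tri t).indicator (Function.uncurry G)) (volume.prod volume)) :
    ∫ τ in (0:ℝ)..t, ∫ s in (0:ℝ)..τ, G τ s = ∫ s in (0:ℝ)..t, ∫ τ in s..t, G τ s := by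
  have := integral_integral_swap (f := fun τ s => (Tri t).indicator (Function.uncurry G) (τ, s)) hG
  simp only [Tri_int_fst, Tri_int_snd] at this
  rw [integral_indicator measurableSet_Ioc, integral_indicator measurableSet_Ioc] at this
  rw [intervalIntegral.integral_of_le ht, intervalIntegral.integral_of_le ht, this]

lemma tri_fubini_cont (G : ℝ → ℝ → X) {t : ℝ} (ht : 0 ≤ t)
    (hG : Continuous (Function.uncurry G)) :
    ∫ τ in (0:ℝ)..t, ∫ s in (0:ℝ)..τ, G τ s = ∫ s in (0:ℝ)..t, ∫ τ in s..t, G τ s := by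
  apply tri_fubini G ht
  rw [integrable_indicator_iff (Tri_meas t)]
  have : IntegrableOn (Function.uncurry G) (Icc 0 t ×ˢ Icc 0 t) (volume.prod volume) :=
    hG.continuousOn.integrableOn_compact (isCompact_Icc.prod isCompact_Icc)
  refine this.mono_set ?_
  rintro ⟨τ, s⟩ ⟨h1, h2, h3⟩
  simp only at h1 h2 h3
  exact ⟨⟨by simp only; linarith, h3⟩, ⟨h1.le, by simp only; linarith⟩⟩

noncomputable def J (a : ℝ) (φ : ℝ → X) (t : ℝ) : X := ∫ s in (0:ℝ)..t, g a (t - s) • φ s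

lemma g_integrable {a : ℝ} (ha : 0 < a) (t : ℝ) :
    IntervalIntegrable (fun s => g a (t - s)) volume 0 t := by
  have h : IntervalIntegrable (g a) volume 0 t := by
    unfold g
    exact (intervalIntegral.intervalIntegrable_rpow' (by linarith)).div_const _
  have := (h.comp_sub_left t).symm
  simpa using this

lemma J_integrable {a : ℝ} (ha : 0 < a) {φ : ℝ → X} (hφ : Continuous φ) (t : ℝ) :
    IntervalIntegrable (fun s => g a (t - s) • φ s) volume 0 t :=
  (g_integrable ha t).smul_continuousOn hφ.continuousOn

lemma J_assoc [CompleteSpace X] {a b : ℝ} (ha : 0 < a) (hb : 0 < b) {φ : ℝ → X} (hφ : Continuous φ)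
    {t : ℝ} (ht : 0 ≤ t) : J a (J b φ) t = J (a + b) φ t := by
  set G : ℝ → ℝ → X := fun τ s => (g a (t - τ) * g b (τ - s)) • φ s with hGdef
  have hbint : ∀ s ∈ Ioo 0 t, IntervalIntegrable (fun τ => g a (t - τ) * g b (τ - s)) volume s t := by
    intro s hs
    apply intervalIntegral.intervalIntegrable_of_integral_ne_zero
    rw [g_beta ha hb hs.2]
    exact (div_pos (Real.rpow_pos_of_pos (by linarith [hs.2]) _)
      (Real.Gamma_pos_of_pos (by linarith))).ne'
  have hne : ∀ᵐ s : ℝ, s ≠ t := by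
    simp [ae_iff]
  have hmeas : AEStronglyMeasurable ((Tri t).indicator (Function.uncurry G)) (volume.prod volume) := by
    apply AEStronglyMeasurable.indicator _ (Tri_meas t)
    have : Function.uncurry G = fun p : ℝ × ℝ => (g a (t - p.1) * g b (p.1 - p.2)) • φ p.2 := rfl
    rw [this]
    apply AEStronglyMeasurable.smul
    · have h1 := (g_meas a).comp (measurable_const.sub measurable_fst : Measurable fun p : ℝ × ℝ => t - p.1)
      have h2 := (g_meas b).comp (measurable_fst.sub measurable_snd : Measurable fun p : ℝ × ℝ => p.1 - p.2)
      exact (h1.mul h2).aestronglyMeasurable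
    · exact (hφ.comp continuous_snd).aestronglyMeasurable
  have hInt : Integrable ((Tri t).indicator (Function.uncurry G)) (volume.prod volume) := by
    rw [integrable_prod_iff' hmeas]
    constructor
    · filter_upwards [hne] with s hs
      rw [Tri_snd]
      by_cases h1 : s ∈ Ioc 0 t
      · simp only [indicator_of_mem h1]
        rw [integrable_indicator_iff measurableSet_Icc,
          ← intervalIntegrable_iff_integrableOn_Icc_of_le h1.2]
        exact (hbint s ⟨h1.1, lt_of_le_of_ne h1.2 hs⟩).smul_continuousOn continuousOn_const
      · simp [indicator_of_notMem h1]
    · have hn : ∀ p : ℝ × ℝ, ‖(Tri t).indicator (Function.uncurry G) p‖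
          = (Tri t).indicator (Function.uncurry fun τ s => ‖G τ s‖) p := by
        intro p
        rw [norm_indicator_eq_indicator_norm]
        rfl
      simp only [hn, Tri_int_snd]
      rw [integrable_indicator_iff measurableSet_Ioc, ← intervalIntegrable_iff_integrableOn_Ioc_of_le ht]
      have hJ := J_integrable (show 0 < a + b by linarith) hφ.norm t
      refine hJ.congr_ae ?_
      rw [uIoc_of_le ht]
      filter_upwards [ae_restrict_mem measurableSet_Ioc, ae_restrict_of_ae hne] with s hs hs'
      have hlt : s < t := lt_of_le_of_ne hs.2 hs'
      rw [← g_beta ha hb hlt, smul_eq_mul, ← intervalIntegral.integral_mul_const]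
      refine intervalIntegral.integral_congr ?_
      intro τ hτ
      rw [uIcc_of_le hs.2] at hτ
      simp only [hGdef]
      rw [norm_smul, Real.norm_of_nonneg]
      exact mul_nonneg (g_nonneg ha (by linarith [hτ.2])) (g_nonneg hb (by linarith [hτ.1]))
  have hF := tri_fubini G ht hInt
  have e1 : J a (J b φ) t = ∫ τ in (0:ℝ)..t, ∫ s in (0:ℝ)..τ, G τ s := by
    simp only [J, hGdef, mul_smul, intervalIntegral.integral_smul]
  rw [e1, hF]
  unfold J
  refine intervalIntegral.integral_congr_ae ?_
  filter_upwards [hne] with s hs' hs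
  rw [uIoc_of_le ht] at hs
  have hlt : s < t := lt_of_le_of_ne hs.2 hs'
  rw [← g_beta ha hb hlt, ← intervalIntegral.integral_smul_const]

end

section
variable {X : Type*} [NormedAddCommGroup X] [NormedSpace ℝ X]

lemma J_add {a : ℝ} (ha : 0 < a) {φ ψ : ℝ → X} (hφ : Continuous φ) (hψ : Continuous ψ) (t : ℝ) :
    J a (fun s => φ s + ψ s) t = J a φ t + J a ψ t := by
  unfold J
  rw [← intervalIntegral.integral_add (J_integrable ha hφ t) (J_integrable ha hψ t)]
  simp only [smul_add]

lemma J_sub {a : ℝ} (ha : 0 < a) {φ ψ : ℝ → X} (hφ : Continuous φ) (hψ : Continuous ψ) (t : ℝ) :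
    J a (fun s => φ s - ψ s) t = J a φ t - J a ψ t := by
  unfold J
  rw [← intervalIntegral.integral_sub (J_integrable ha hφ t) (J_integrable ha hψ t)]
  simp only [smul_sub]

lemma J_congr (a : ℝ) {φ ψ : ℝ → X} {t : ℝ} (ht : 0 ≤ t) (h : ∀ s ∈ Icc 0 t, φ s = ψ s) :
    J a φ t = J a ψ t := by
  unfold J
  refine intervalIntegral.integral_congr ?_
  intro s hs
  rw [uIcc_of_le ht] at hs
  simp only [h s hs]

lemma J_one (φ : ℝ → X) (t : ℝ) : J 1 φ t = ∫ s in (0:ℝ)..t, φ s := by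
  simp [J, g_one]

lemma J_cont {a : ℝ} (ha : 1 ≤ a) {φ : ℝ → X} (hφ : Continuous φ) : Continuous (J a φ) := by
  unfold J
  have := g_cont ha
  refine intervalIntegral.continuous_parametric_intervalIntegral_of_continuous ?_ continuous_id
  change Continuous fun p : ℝ × ℝ => g a (p.1 - p.2) • φ p.2
  fun_prop

lemma J_one_inj [CompleteSpace X] {r : ℝ} (hr : 0 < r) {φ : ℝ → X} (hφ : Continuous φ)
    (h : ∀ t ∈ Icc 0 r, J 1 φ t = 0) : ∀ t ∈ Icc 0 r, φ t = 0 := by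
  intro t ht
  have h1 : HasDerivWithinAt (J 1 φ) (φ t) (Icc 0 r) t := by
    have : J 1 φ = fun t => ∫ s in (0:ℝ)..t, φ s := by funext t; exact J_one φ t
    rw [this]
    exact (intervalIntegral.integral_hasDerivAt_right (hφ.intervalIntegrable _ _)
      (hφ.stronglyMeasurableAtFilter _ _) hφ.continuousAt).hasDerivWithinAt
  have h2 : HasDerivWithinAt (J 1 φ) 0 (Icc 0 r) t :=
    (hasDerivWithinAt_const t (Icc 0 r) (0:X)).congr h (h t ht)
  exact ((uniqueDiffOn_Icc hr) t ht).eq_deriv _ h1 h2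

lemma J_two_inj [CompleteSpace X] {r : ℝ} (hr : 0 < r) {φ ψ : ℝ → X} (hφ : Continuous φ)
    (hψ : Continuous ψ)
    (h : ∀ t ∈ Icc 0 r, J 2 φ t = J 2 ψ t) : ∀ t ∈ Icc 0 r, φ t = ψ t := by
  have hc : Continuous (fun s => φ s - ψ s) := hφ.sub hψ
  have h1 := J_one_inj hr hc
  have h2 := J_one_inj hr (J_cont le_rfl hc)
  intro t ht
  refine sub_eq_zero.1 (h1 (h2 ?_) t ht)
  intro t ht
  rw [J_assoc one_pos one_pos hc ht.1, show (1:ℝ) + 1 = 2 by norm_num, J_sub two_pos hφ hψ, h t ht,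
    sub_self]

/-- integrate a C¹ function on [0,r] -/
lemma ftc_Icc [CompleteSpace X] {r : ℝ} {F F' : ℝ → X}
    (h : ∀ t ∈ Icc 0 r, HasDerivWithinAt F (F' t) (Icc 0 r) t)
    (hc : ContinuousOn F' (Icc 0 r)) : ∀ t ∈ Icc 0 r, F t = F 0 + ∫ s in (0:ℝ)..t, F' s := by
  intro t ht
  have hsub : Icc 0 t ⊆ Icc 0 r := Icc_subset_Icc le_rfl ht.2
  rw [intervalIntegral.integral_eq_sub_of_hasDerivAt_of_le ht.1 (f := F)]
  · abel
  · exact fun s hs => ((h s (hsub hs)).continuousWithinAt).mono hsub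
  · intro s hs
    exact (h s (hsub (Ioo_subset_Icc_self hs))).hasDerivAt
      (Icc_mem_nhds hs.1 (lt_of_lt_of_le hs.2 ht.2))
  · exact (hc.mono hsub).intervalIntegrable_of_Icc ht.1

/-- key: strong solution is mild. v continuous with v = o(s) at 0 -/
lemma mild [CompleteSpace X] {α r : ℝ} (hα1 : 1 < α) (hα2 : α < 2) (hr : 0 < r)
    {v h w' : ℝ → X} (hv : Continuous v) (hh : Continuous h)
    (hv0 : v 0 = 0) (hv' : HasDerivWithinAt v 0 (Icc 0 r) 0)
    (hw : ∀ t ∈ Icc 0 r, HasDerivWithinAt (J (2 - α) v) (w' t) (Icc 0 r) t)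
    (hw' : ∀ t ∈ Icc 0 r, HasDerivWithinAt w' (h t) (Icc 0 r) t) :
    ∀ t ∈ Icc 0 r, v t = J α h t := by
  have h2α : 0 < 2 - α := by linarith
  have h00 : (0:ℝ) ∈ Icc 0 r := ⟨le_rfl, hr.le⟩
  have hw0 : J (2 - α) v 0 = 0 := by simp [J]
  have hd0 : HasDerivWithinAt (J (2 - α) v) 0 (Icc 0 r) 0 := by
    rw [hasDerivWithinAt_iff_isLittleO, Asymptotics.isLittleO_iff] at hv' ⊢
    intro c hc
    have hgi : ∀ a b, IntervalIntegrable (g (2 - α)) volume a b := by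
      intro a b
      unfold g
      exact (intervalIntegral.intervalIntegrable_rpow' (by linarith)).div_const _
    set M : ℝ := (∫ s in (0:ℝ)..r, g (2 - α) s) + 1 with hM
    have hM0 : 0 ≤ ∫ s in (0:ℝ)..r, g (2 - α) s :=
      intervalIntegral.integral_nonneg hr.le fun s hs => g_nonneg h2α hs.1
    have hMpos : 0 < M := by linarith
    obtain ⟨δ, hδ, hball⟩ := Metric.mem_nhdsWithin_iff.1 (hv' (div_pos hc hMpos))
    refine Metric.mem_nhdsWithin_iff.2 ⟨δ, hδ, ?_⟩
    rintro t ⟨htδ, ht⟩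
    simp only [mem_ofPred_eq, hw0, sub_zero, smul_zero]
    rw [Metric.mem_ball, dist_zero_right, Real.norm_of_nonneg ht.1] at htδ
    rw [Real.norm_of_nonneg ht.1]
    have hvb : ∀ s ∈ Icc 0 t, ‖v s‖ ≤ c / M * t := by
      intro s hs
      have := @hball s ⟨by
        rw [Metric.mem_ball, dist_zero_right, Real.norm_of_nonneg hs.1]
        linarith [hs.2], ⟨hs.1, hs.2.trans ht.2⟩⟩
      simp only [mem_ofPred_eq, hv0, sub_zero, smul_zero] at this
      rw [Real.norm_of_nonneg hs.1] at this
      exact this.trans (mul_le_mul_of_nonneg_left hs.2 (by positivity))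
    have hKt : ∫ s in (0:ℝ)..t, g (2 - α) (t - s) = ∫ s in (0:ℝ)..t, g (2 - α) s := by
      rw [intervalIntegral.integral_comp_sub_left (fun s => g (2 - α) s)]
      simp
    have hKr : ∫ s in (0:ℝ)..t, g (2 - α) s ≤ M := by
      have h1 := intervalIntegral.integral_add_adjacent_intervals (hgi 0 t) (hgi t r)
      have h2 : 0 ≤ ∫ s in t..r, g (2 - α) s :=
        intervalIntegral.integral_nonneg ht.2 fun s hs => g_nonneg h2α (ht.1.trans hs.1)
      linarith
    calc ‖J (2 - α) v t‖ ≤ ∫ s in (0:ℝ)..t, g (2 - α) (t - s) * (c / M * t) := by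
          unfold J
          refine intervalIntegral.norm_integral_le_of_norm_le ht.1 ?_
            ((g_integrable h2α t).mul_const _)
          refine Filter.Eventually.of_forall fun s hs => ?_
          have hg := g_nonneg (t := t - s) h2α (by linarith [hs.2])
          rw [norm_smul, Real.norm_of_nonneg hg]
          exact mul_le_mul_of_nonneg_left (hvb s ⟨hs.1.le, hs.2⟩) hg
      _ = (∫ s in (0:ℝ)..t, g (2 - α) s) * (c / M * t) := by
          rw [intervalIntegral.integral_mul_const, hKt]
      _ ≤ M * (c / M * t) :=
          mul_le_mul_of_nonneg_right hKr (mul_nonneg (by positivity) ht.1)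
      _ = c * t := by field_simp
  have hw'0 : w' 0 = 0 := ((uniqueDiffOn_Icc hr) 0 h00).eq_deriv _ (hw 0 h00) hd0
  have hw'c : ContinuousOn w' (Icc 0 r) := fun t ht => (hw' t ht).continuousWithinAt
  have e1 : ∀ t ∈ Icc 0 r, w' t = J 1 h t := by
    intro t ht
    rw [ftc_Icc hw' hh.continuousOn t ht, hw'0, zero_add, J_one]
  have e2 : ∀ t ∈ Icc 0 r, J (2 - α) v t = J 2 h t := by
    intro t ht
    rw [ftc_Icc hw hw'c t ht, hw0, zero_add, ← J_one]
    rw [J_congr 1 ht.1 (ψ := J 1 h) (fun s hs => e1 s ⟨hs.1, hs.2.trans ht.2⟩),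
      J_assoc one_pos one_pos hh ht.1]
    norm_num
  have hα0 : 0 < α := by linarith
  refine J_two_inj hr hv (J_cont hα1.le hh) ?_
  intro t ht
  have := J_congr α ht.1 (fun s hs => e2 s ⟨hs.1, hs.2.trans ht.2⟩)
  rw [J_assoc hα0 h2α hv ht.1, J_assoc hα0 two_pos hh ht.1] at this
  rw [J_assoc two_pos hα0 hh ht.1, add_comm 2 α, ← this]
  congr 1; ring

end

section
variable {X : Type*} [NormedAddCommGroup X] [NormedSpace ℂ X]

lemma joint_cont [CompleteSpace X] {r : ℝ} (hr : 0 ≤ r) {S : ℝ → X →L[ℂ] X}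
    (hS : ∀ x : X, ContinuousOn (fun t => S t x) (Ici (0:ℝ))) :
    Continuous (fun p : ℝ × X => S (projIcc 0 r hr p.1) p.2) := by
  have hx : ∀ x, Continuous (fun t : ℝ => S (projIcc 0 r hr t) x) := by
    intro x
    refine (hS x).comp_continuous (continuous_subtype_val.comp continuous_projIcc) ?_
    intro t
    exact (projIcc 0 r hr t).2.1
  obtain ⟨C, hC⟩ := banach_steinhaus (g := fun t : Icc (0:ℝ) r => S t) (by
    intro x
    obtain ⟨C, hC⟩ := isCompact_Icc.exists_bound_of_continuousOn ((hS x).mono (fun s (hs : s ∈ Icc 0 r) => hs.1))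
    exact ⟨C, fun i => hC i i.2⟩)
  rw [continuous_iff_continuousAt]
  rintro ⟨t0, x0⟩
  have h1 : Tendsto (fun p : ℝ × X => S (projIcc 0 r hr p.1) x0) (𝓝 (t0, x0))
      (𝓝 (S (projIcc 0 r hr t0) x0)) :=
    ((hx x0).comp continuous_fst).continuousAt (x := (t0, x0))
  have h2 : Tendsto (fun p : ℝ × X => S (projIcc 0 r hr p.1) (p.2 - x0)) (𝓝 (t0, x0)) (𝓝 0) := by
    refine squeeze_zero_norm (a := fun p : ℝ × X => C * ‖p.2 - x0‖) ?_ ?_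
    · intro p
      exact ((S _).le_opNorm _).trans (mul_le_mul_of_nonneg_right (hC _) (norm_nonneg _))
    · have : Continuous fun p : ℝ × X => C * ‖p.2 - x0‖ := by fun_prop
      have := this.continuousAt (x := (t0, x0))
      simpa [ContinuousAt] using this
  have := h2.add h1
  simpa [ContinuousAt] using this

end

section
variable {X : Type*} [NormedAddCommGroup X] [NormedSpace ℂ X]

noncomputable def V (E : ℝ → X →L[ℂ] X) (φ : ℝ → X) (t : ℝ) : X :=
  ∫ s in (0:ℝ)..t, E (t - s) (φ s)

variable {E : ℝ → X →L[ℂ] X} (hE : Continuous (fun p : ℝ × X => E p.1 p.2))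

lemma E_cont (hE : Continuous (fun p : ℝ × X => E p.1 p.2)) {Y : Type*} [TopologicalSpace Y]
    {a : Y → ℝ} {b : Y → X} (ha : Continuous a) (hb : Continuous b) :
    Continuous (fun y => E (a y) (b y)) :=
  hE.comp (ha.prodMk hb)

lemma V_cont (hE : Continuous (fun p : ℝ × X => E p.1 p.2)) {φ : ℝ → X} (hφ : Continuous φ) :
    Continuous (V E φ) := by
  unfold V
  refine intervalIntegral.continuous_parametric_intervalIntegral_of_continuous ?_ continuous_id
  change Continuous fun p : ℝ × ℝ => E (p.1 - p.2) (φ p.2)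
  exact E_cont hE (by fun_prop) (by fun_prop)

lemma V_int (hE : Continuous (fun p : ℝ × X => E p.1 p.2)) {φ : ℝ → X} (hφ : Continuous φ) (t : ℝ) :
    IntervalIntegrable (fun s => E (t - s) (φ s)) volume 0 t :=
  (E_cont hE (by fun_prop) hφ).intervalIntegrable _ _

lemma V_sub (hE : Continuous (fun p : ℝ × X => E p.1 p.2)) {φ ψ : ℝ → X} (hφ : Continuous φ)
    (hψ : Continuous ψ) (t : ℝ) : V E (fun s => φ s - ψ s) t = V E φ t - V E ψ t := by
  unfold V
  rw [← intervalIntegral.integral_sub (V_int hE hφ t) (V_int hE hψ t)]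
  simp only [map_sub]

lemma V_congr {φ ψ : ℝ → X} {t : ℝ} (ht : 0 ≤ t) (h : ∀ s ∈ Icc 0 t, φ s = ψ s) :
    V E φ t = V E ψ t := by
  unfold V
  refine intervalIntegral.integral_congr ?_
  intro s hs
  rw [uIcc_of_le ht] at hs
  simp only [h s hs]

lemma V_const (x : X) (t : ℝ) : V E (fun _ => x) t = J 1 (fun s => E s x) t := by
  rw [J_one]
  unfold V
  rw [intervalIntegral.integral_comp_sub_left (fun s => E s x)]
  simp

lemma V_lin (x : X) (t : ℝ) : V E (fun s => s • x) t = J 2 (fun s => E s x) t := by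
  unfold V J
  have := intervalIntegral.integral_comp_sub_left (a := 0) (b := t) (fun s => g 2 (t - s) • E s x) t
  simp only [sub_zero, sub_self] at this
  rw [← this]
  refine intervalIntegral.integral_congr ?_
  intro s _
  simp only [g_two, sub_sub_cancel, ContinuousLinearMap.map_smul_of_tower]

variable [CompleteSpace X]

lemma VA (hE : Continuous (fun p : ℝ × X => E p.1 p.2)) {φ : ℝ → X} (hφ : Continuous φ)
    {α : ℝ} (hα : 1 ≤ α) {t : ℝ} (ht : 0 ≤ t) :
    J α (V E φ) t = ∫ s in (0:ℝ)..t, J α (fun σ => E σ (φ s)) (t - s) := by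
  have hg := g_cont hα
  have h := tri_fubini_cont (fun τ s => g α (t - τ) • E (τ - s) (φ s)) ht (by
    change Continuous fun p : ℝ × ℝ => g α (t - p.1) • E (p.1 - p.2) (φ p.2)
    exact (by fun_prop : Continuous fun p : ℝ × ℝ => g α (t - p.1)).smul
      (E_cont hE (by fun_prop) (by fun_prop)))
  simp only [intervalIntegral.integral_smul] at h
  refine h.trans ?_
  refine intervalIntegral.integral_congr ?_
  intro s _
  have := intervalIntegral.integral_comp_sub_right (a := s) (b := t)
    (fun σ => g α (t - s - σ) • E σ (φ s)) s
  simp only [sub_self] at this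
  simp only [J]
  rw [← this]
  simp only [sub_sub_sub_cancel_right]

lemma VB (hE : Continuous (fun p : ℝ × X => E p.1 p.2)) {φ : ℝ → X} (hφ : Continuous φ)
    {α : ℝ} (hα : 1 ≤ α) {t : ℝ} (ht : 0 ≤ t) :
    V E (J α φ) t = J α (V E φ) t := by
  rw [VA hE hφ hα ht]
  have hg := g_cont hα
  have h := tri_fubini_cont (fun τ s => g α (τ - s) • E (t - τ) (φ s)) ht (by
    change Continuous fun p : ℝ × ℝ => g α (p.1 - p.2) • E (t - p.1) (φ p.2)
    exact (by fun_prop : Continuous fun p : ℝ × ℝ => g α (p.1 - p.2)).smul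
      (E_cont hE (by fun_prop) (by fun_prop)))
  have e : V E (J α φ) t = ∫ τ in (0:ℝ)..t, ∫ s in (0:ℝ)..τ, g α (τ - s) • E (t - τ) (φ s) := by
    unfold V
    refine intervalIntegral.integral_congr ?_
    intro τ _
    simp only [J]
    rw [← ContinuousLinearMap.intervalIntegral_comp_comm]
    · simp only [ContinuousLinearMap.map_smul_of_tower]
    · exact ((by fun_prop : Continuous fun s : ℝ => g α (τ - s)).smul hφ).intervalIntegrable _ _
  rw [e]
  refine h.trans ?_
  refine intervalIntegral.integral_congr ?_
  intro s _
  have := intervalIntegral.integral_comp_sub_left (a := s) (b := t)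
    (fun σ => g α (t - s - σ) • E σ (φ s)) t
  simp only [sub_self] at this
  simp only [J]
  rw [← this]
  refine intervalIntegral.integral_congr ?_
  intro τ _
  simp only
  congr 2
  ring

/-- core computation with globally continuous data -/
lemma core (hE : Continuous (fun p : ℝ × X => E p.1 p.2)) {α r : ℝ} (hα1 : 1 < α) (hα2 : α < 2)
    (hr : 0 < r) {u h au fe : ℝ → X} (hu : Continuous u) (hh : Continuous h) (hau : Continuous au)
    (hfe : Continuous fe) (hsum : ∀ s, fe s = h s - au s) {x y ax ay : X}
    (hmild : ∀ t ∈ Icc 0 r, u t - x - t • y = J α h t)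
    (hEx : ∀ t ∈ Icc 0 r, E t x = x + J α (fun s => E s ax) t)
    (hEy : ∀ t ∈ Icc 0 r, E t y = y + J α (fun s => E s ay) t)
    (hEu : ∀ s ∈ Icc 0 r, ∀ t ∈ Icc 0 r, E t (u s) = u s + J α (fun σ => E σ (au s)) t) :
    ∀ t ∈ Icc 0 r, V E fe t = J 1 (fun s => h s - E s ax - J 1 (fun s => E s ay) s) t := by
  have hα0 : 0 < α := by linarith
  have hcx : ∀ z, Continuous fun s => E s z := fun z => E_cont hE continuous_id continuous_const
  have hfe' : fe = fun s => h s - au s := funext hsum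
  have hJay := J_cont le_rfl (hcx ay)
  have hQ : Continuous (fun s => h s - E s ax - J 1 (fun s => E s ay) s) :=
    (hh.sub (hcx ax)).sub hJay
  have key : ∀ t ∈ Icc 0 r, J α (V E fe) t
      = J α (J 1 (fun s => h s - E s ax - J 1 (fun s => E s ay) s)) t := by
    intro t ht
    have m1 : J α (V E fe) t = J α (V E h) t - J α (V E au) t := by
      rw [← J_sub hα0 (V_cont hE hh) (V_cont hE hau)]
      congr 1
      funext s
      rw [hfe', V_sub hE hh hau]
    have m2 : J α (V E au) t = V E u t - J 1 u t := by
      rw [VA hE hau hα1.le ht.1, J_one, V,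
        ← intervalIntegral.integral_sub (V_int hE hu t) (hu.intervalIntegrable _ _)]
      refine intervalIntegral.integral_congr ?_
      intro s hs
      rw [uIcc_of_le ht.1] at hs
      simp only
      rw [hEu s ⟨hs.1, hs.2.trans ht.2⟩ (t - s) ⟨by linarith [hs.2], by linarith [hs.1, ht.2]⟩]
      abel
    have m3 : J α (V E h) t = V E u t - J 1 (fun s => E s x) t - J 2 (fun s => E s y) t := by
      rw [← VB hE hh hα1.le ht.1, ← V_congr ht.1 (φ := fun s => u s - x - s • y)
        (fun s hs => hmild s ⟨hs.1, hs.2.trans ht.2⟩), V_sub hE (by fun_prop) (by fun_prop),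
        V_sub hE hu (by fun_prop), V_const, V_lin]
    have m4 : J 1 (fun s => E s x) t = J 1 (fun _ => x) t + J (1 + α) (fun s => E s ax) t := by
      rw [J_congr 1 ht.1 (fun s hs => hEx s ⟨hs.1, hs.2.trans ht.2⟩),
        J_add one_pos continuous_const (J_cont hα1.le (hcx ax)),
        J_assoc one_pos hα0 (hcx ax) ht.1]
    have m5 : J 2 (fun s => E s y) t = J 2 (fun _ => y) t + J (2 + α) (fun s => E s ay) t := by
      rw [J_congr 2 ht.1 (fun s hs => hEy s ⟨hs.1, hs.2.trans ht.2⟩),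
        J_add two_pos continuous_const (J_cont hα1.le (hcx ay)),
        J_assoc two_pos hα0 (hcx ay) ht.1]
    have m6 : J 1 u t = J 1 (fun _ => x) t + J 2 (fun _ => y) t + J (1 + α) h t := by
      have hu' : ∀ s ∈ Icc 0 t, u s = (x + J 1 (fun _ => y) s) + J α h s := by
        intro s hs
        rw [← hmild s ⟨hs.1, hs.2.trans ht.2⟩, J_one]
        simp
      rw [J_congr 1 ht.1 hu',
        J_add one_pos (φ := fun s => x + J 1 (fun _ => y) s) (continuous_const.add (J_cont le_rfl continuous_const)) (J_cont hα1.le hh),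
        J_add one_pos continuous_const (J_cont le_rfl continuous_const),
        J_assoc one_pos hα0 hh ht.1, J_assoc one_pos one_pos continuous_const ht.1,
        show (1:ℝ) + 1 = 2 by norm_num]
    have m7 : J α (J 1 (fun s => h s - E s ax - J 1 (fun s => E s ay) s)) t
        = J (1 + α) h t - J (1 + α) (fun s => E s ax) t - J (2 + α) (fun s => E s ay) t := by
      have h1α : 0 < 1 + α := by linarith
      rw [J_assoc hα0 one_pos hQ ht.1, add_comm α 1, J_sub h1α (φ := fun s => h s - E s ax) (hh.sub (hcx ax)) hJay,
        J_sub h1α hh (hcx ax), J_assoc h1α one_pos (hcx ay) ht.1,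
        show 1 + α + 1 = 2 + α by ring]
    rw [m1, m2, m3, m4, m5, m6, m7]
    abel
  have hJQ := J_cont le_rfl hQ
  refine J_two_inj hr (V_cont hE hfe) hJQ ?_
  intro t ht
  have := J_congr (2 - α) ht.1 (fun s hs => key s ⟨hs.1, hs.2.trans ht.2⟩)
  rw [J_assoc (by linarith) hα0 (V_cont hE hfe) ht.1, J_assoc (by linarith) hα0 hJQ ht.1] at this
  simpa using this

end

theorem stmt_10
    {X : Type*} [NormedAddCommGroup X] [NormedSpace ℂ X] [CompleteSpace X]
    (α : ℝ) (hα1 : 1 < α) (hα2 : α < 2)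
    (A : X →ₗ.[ℂ] X) (hA_closed : IsClosed (A.graph : Set (X × X)))
    (hA_dense : Dense (A.domain : Set X))
    (S : ℝ → X →L[ℂ] X)
    (hS_cont : ∀ x : X, ContinuousOn (fun t => S t x) (Ici (0:ℝ)))
    (hS_zero : S 0 = 1)
    (hS_dom : ∀ t : ℝ, 0 ≤ t → ∀ x ∈ A.domain, S t x ∈ A.domain)
    (hS_comm : ∀ t : ℝ, 0 ≤ t → ∀ x y : X, (x, y) ∈ A.graph → (S t x, S t y) ∈ A.graph)
    (hS_eq : ∀ t : ℝ, 0 ≤ t → ∀ x y : X, (x, y) ∈ A.graph →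
      S t x = x + ∫ s in (0:ℝ)..t, g α (t - s) • S s y)
    (r : ℝ) (hr : 0 < r) (f : ℝ → X) (hf : ContinuousOn f (Icc 0 r))
    (x y : X) (hx : x ∈ A.domain) (hy : y ∈ A.domain)
    (hex : ∃ u : ℝ → X, IsStrongSolution α A r f x y u) :
    ∃ D : ℝ → X, ContinuousOn D (Icc 0 r) ∧
      ∀ t ∈ Icc (0:ℝ) r,
        HasDerivWithinAt (fun τ => ∫ s in (0:ℝ)..τ, S (τ - s) (f s)) (D t) (Icc 0 r) t := by
  obtain ⟨u, Au, u', w', w'', huc, hgr, hAuc, hud, hu'c, hw, hw', hw''c, hw''e, hu0, hu'0⟩ := hex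
  obtain ⟨ax, hax⟩ : ∃ ax, (x, ax) ∈ A.graph := ⟨A ⟨x, hx⟩, A.mem_graph ⟨x, hx⟩⟩
  obtain ⟨ay, hay⟩ : ∃ ay, (y, ay) ∈ A.graph := ⟨A ⟨y, hy⟩, A.mem_graph ⟨y, hy⟩⟩
  have hE := joint_cont hr.le hS_cont
  set p : ℝ → ℝ := fun t => (projIcc 0 r hr.le t : ℝ) with hp
  have hpc : Continuous p := continuous_subtype_val.comp continuous_projIcc
  have hpm : ∀ t, p t ∈ Icc 0 r := fun t => (projIcc 0 r hr.le t).2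
  have hpe : ∀ t ∈ Icc 0 r, p t = t := by
    intro t ht
    simp only [hp, projIcc_of_mem hr.le ht]
  set E : ℝ → X →L[ℂ] X := fun t => S (p t) with hEdef
  have hE : Continuous (fun q : ℝ × X => E q.1 q.2) := hE
  have hue : Continuous (fun t => u (p t)) := huc.comp_continuous hpc hpm
  have haue : Continuous (fun t => Au (p t)) := hAuc.comp_continuous hpc hpm
  have hfe : Continuous (fun t => f (p t)) := hf.comp_continuous hpc hpm
  have hSE : ∀ a b : X, (a, b) ∈ A.graph → ∀ t ∈ Icc 0 r,
      E t a = a + J α (fun s => E s b) t := by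
    intro a b hab t ht
    simp only [hEdef, hpe t ht]
    rw [hS_eq t ht.1 a b hab]
    congr 1
    refine J_congr α (φ := fun s => S s b) ht.1 ?_
    intro s hs
    rw [hpe s ⟨hs.1, hs.2.trans ht.2⟩]
  have hmild : ∀ t ∈ Icc 0 r, u (p t) - x - t • y = J α (fun t => Au (p t) + f (p t)) t := by
    have h0r : (0:ℝ) ∈ Icc 0 r := ⟨le_rfl, hr.le⟩
    refine mild (v := fun t => u (p t) - x - t • y) (w' := w') hα1 hα2 hr
      ((hue.sub continuous_const).sub (continuous_id.smul continuous_const))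
      (haue.add hfe) ?_ ?_ ?_ ?_
    · simp [hpe 0 h0r, hu0]
    · have h1 : HasDerivWithinAt (fun t => u t - x - t • y) (u' 0 - (1:ℝ) • y) (Icc 0 r) 0 :=
        ((hud 0 h0r).sub_const x).sub ((hasDerivWithinAt_id 0 (Icc 0 r)).smul_const y)
      rw [hu'0, one_smul, sub_self] at h1
      exact h1.congr (fun t ht => by simp only [hpe t ht]) (by simp only [hpe 0 h0r])
    · intro t ht
      refine (hw t ht).congr_of_mem ?_ ht
      intro τ hτ
      refine J_congr (2 - α) hτ.1 ?_
      intro s hs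
      rw [hpe s ⟨hs.1, hs.2.trans hτ.2⟩]
    · intro t ht
      have := hw' t ht
      rw [hw''e t ht] at this
      rwa [hpe t ht]
  have hc := core (h := fun t => Au (p t) + f (p t)) (fe := fun t => f (p t))
    (au := fun t => Au (p t)) hE hα1 hα2 hr hue (haue.add hfe) haue hfe (fun s => (add_sub_cancel_left _ _).symm) hmild
    (hSE x ax hax) (hSE y ay hay) (fun s _ => hSE _ _ (hgr (p s) (hpm s)))
  have hcx : ∀ z, Continuous fun s => E s z := fun z => E_cont hE continuous_id continuous_const
  have hD : Continuous (fun s => Au (p s) + f (p s) - E s ax - J 1 (fun s => E s ay) s) :=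
    ((haue.add hfe).sub (hcx ax)).sub (J_cont le_rfl (hcx ay))
  refine ⟨_, hD.continuousOn, ?_⟩
  intro t ht
  have h1 : HasDerivWithinAt
      (fun t => ∫ s in (0:ℝ)..t, (Au (p s) + f (p s) - E s ax - J 1 (fun s => E s ay) s))
      (Au (p t) + f (p t) - E t ax - J 1 (fun s => E s ay) t) (Icc 0 r) t :=
    (intervalIntegral.integral_hasDerivAt_right (hD.intervalIntegrable _ _)
      (hD.stronglyMeasurableAtFilter _ _) hD.continuousAt).hasDerivWithinAt
  refine h1.congr_of_mem ?_ ht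
  intro τ hτ
  refine Eq.trans ?_ ((hc τ hτ).trans (J_one _ _))
  unfold V
  refine intervalIntegral.integral_congr ?_
  intro s hs
  rw [uIcc_of_le hτ.1] at hs
  simp only [hEdef]
  rw [hpe s ⟨hs.1, hs.2.trans hτ.2⟩, hpe (τ - s) ⟨by linarith [hs.2], by linarith [hs.1, hτ.2]⟩]
end

section
/- Let A generate an α-times resolvent family {S_α(t)}_{t≥0} on X, where 1 < α < 2, let r > 0 and let f : [0,r] → X be continuous. If the function t ↦ (S_α*f)(t) = ∫_0^t S_α(t−s)f(s) ds is continuously differentiable on [0,r], then for every t ∈ [0,r] the element (P_α*f)(t) = ∫_0^t P_α(t−s)f(s) ds belongs to D(A), A((P_α*f)(t)) = (S_α*f)'(t) − f(t), and in particular t ↦ A((P_α*f)(t)) is continuous on [0,r]. -/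
open MeasureTheory Set

/-- The convolution of `g β` with `S`. -/
noncomputable def RR {X : Type*} [NormedAddCommGroup X] [NormedSpace ℂ X]
    (β : ℝ) (S : ℝ → X →L[ℂ] X) (t : ℝ) (x : X) : X :=
  ∫ s in (0:ℝ)..t, g β (t - s) • S s x

section helpers
open Filter Topology

variable {X : Type*} [NormedAddCommGroup X] [NormedSpace ℂ X]

theorem fubini_tri (T : ℝ) (hT : 0 ≤ T) (G : ℝ → ℝ → X)
    (hG : Integrable (fun p : ℝ × ℝ => G p.1 p.2)
      ((volume.restrict (Ioc 0 T)).prod (volume.restrict (Ioc 0 T)))) :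
    ∫ τ in (0:ℝ)..T, ∫ s in (0:ℝ)..τ, G (τ - s) s
      = ∫ s in (0:ℝ)..T, ∫ σ in (0:ℝ)..(T - s), G σ s := by
  set H : ℝ × ℝ → X := (Ioc 0 T ×ˢ Ioc 0 T).indicator (fun p => G p.1 p.2) with hH
  have hms : MeasurableSet (Ioc (0:ℝ) T ×ˢ Ioc (0:ℝ) T) := measurableSet_Ioc.prod measurableSet_Ioc
  have hHi : Integrable H (volume.prod volume) := by
    rw [hH, integrable_indicator_iff hms, IntegrableOn, ← Measure.prod_restrict]
    exact hG
  have hK : Integrable (fun p : ℝ × ℝ => H (p.1 - p.2, p.2)) (volume.prod volume) :=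
    (measurePreserving_sub_prod (volume : Measure ℝ) (volume : Measure ℝ)).integrable_comp_of_integrable hHi
  have hK2 : Integrable (Function.uncurry fun τ s : ℝ => H (τ - s, s))
      ((volume.restrict (Ioc 0 T)).prod volume) := by
    have : (volume.restrict (Ioc (0:ℝ) T)).prod (volume : Measure ℝ)
      = ((volume : Measure ℝ).prod volume).restrict (Ioc 0 T ×ˢ univ) := by
      rw [← Measure.prod_restrict, Measure.restrict_univ]
    rw [this]
    exact hK.restrict
  have hsw := integral_integral_swap hK2
  rw [intervalIntegral.integral_of_le hT, intervalIntegral.integral_of_le hT]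
  have hL : ∀ τ ∈ Ioc 0 T, ∫ s in (0:ℝ)..τ, G (τ - s) s = ∫ s, H (τ - s, s) := by
    intro τ hτ
    rw [intervalIntegral.integral_of_le hτ.1.le, integral_Ioc_eq_integral_Ioo,
      ← integral_indicator measurableSet_Ioo]
    congr 1
    ext s
    by_cases h : s ∈ Ioo 0 τ
    · have h' : (τ - s, s) ∈ Ioc (0:ℝ) T ×ˢ Ioc (0:ℝ) T := by
        simp only [mem_prod, mem_Ioc, mem_Ioo] at *
        refine ⟨⟨?_, ?_⟩, ?_, ?_⟩ <;> linarith [h.1, h.2, hτ.1, hτ.2]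
      rw [indicator_of_mem h, hH, indicator_of_mem h']
    · have h' : (τ - s, s) ∉ Ioc (0:ℝ) T ×ˢ Ioc (0:ℝ) T := by
        intro h2
        simp only [mem_prod, mem_Ioc] at h2
        exact h ⟨h2.2.1, by linarith [h2.1.1]⟩
      rw [indicator_of_notMem h, hH, indicator_of_notMem h']
  rw [setIntegral_congr_fun measurableSet_Ioc hL, hsw, ← integral_indicator measurableSet_Ioc]
  congr 1
  ext s
  by_cases hs : s ∈ Ioc 0 T
  · rw [indicator_of_mem hs]
    have h1 : ∫ σ in (0:ℝ)..(T - s), G σ s = ∫ τ in s..T, G (τ - s) s := by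
      rw [intervalIntegral.integral_comp_sub_right (fun σ => G σ s) s, sub_self]
    rw [h1, intervalIntegral.integral_of_le hs.2, ← integral_indicator measurableSet_Ioc,
      ← integral_indicator measurableSet_Ioc]
    congr 1
    ext τ
    by_cases h : τ ∈ Ioc s T
    · have h0 : τ ∈ Ioc 0 T := ⟨hs.1.trans h.1, h.2⟩
      have h' : (τ - s, s) ∈ Ioc (0:ℝ) T ×ˢ Ioc (0:ℝ) T := by
        simp only [mem_prod, mem_Ioc] at *
        refine ⟨⟨?_, ?_⟩, ?_, ?_⟩ <;> linarith [h.1, h.2, hs.1, hs.2]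
      rw [indicator_of_mem h, indicator_of_mem h0, hH, indicator_of_mem h']
    · rw [indicator_of_notMem h]
      by_cases h0 : τ ∈ Ioc 0 T
      · have h' : (τ - s, s) ∉ Ioc (0:ℝ) T ×ˢ Ioc (0:ℝ) T := by
          intro h2
          simp only [mem_prod, mem_Ioc] at h2
          exact h ⟨by linarith [h2.1.1], h0.2⟩
        rw [indicator_of_mem h0, hH, indicator_of_notMem h']
      · rw [indicator_of_notMem h0]
  · rw [indicator_of_notMem hs]
    have : ∀ τ, H (τ - s, s) = 0 := by
      intro τ
      rw [hH, indicator_of_notMem]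
      intro h2
      exact hs h2.2
    simp [this]

theorem S_bdd [CompleteSpace X] (S : ℝ → X →L[ℂ] X)
    (hS : ∀ x : X, ContinuousOn (fun t => S t x) (Ici (0:ℝ))) (R : ℝ) :
    ∃ M : ℝ, ∀ t ∈ Icc 0 R, ‖S t‖ ≤ M := by
  have := banach_steinhaus (g := fun t : Icc (0:ℝ) R => S t) (by
    intro x
    obtain ⟨C, hC⟩ := isCompact_Icc.exists_bound_of_continuousOn
      ((hS x).mono (Icc_subset_Ici_self : Icc 0 R ⊆ Ici 0))
    exact ⟨C, fun i => hC i i.2⟩)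
  obtain ⟨C, hC⟩ := this
  exact ⟨C, fun t ht => hC ⟨t, ht⟩⟩

theorem S_joint [CompleteSpace X] (S : ℝ → X →L[ℂ] X)
    (hS : ∀ x : X, ContinuousOn (fun t => S t x) (Ici (0:ℝ))) :
    Continuous (fun p : ℝ × X => S (max p.1 0) p.2) := by
  have hS' : ∀ x, Continuous (fun t => S (max t 0) x) := fun x =>
    (hS x).comp_continuous (by fun_prop) (fun t => mem_Ici.2 (le_max_right _ _))
  rw [continuous_iff_continuousAt]
  rintro ⟨t₀, x₀⟩
  obtain ⟨M, hM⟩ := S_bdd S hS (max t₀ 0 + 1)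
  have h1 : Tendsto (fun p : ℝ × X => S (max p.1 0) (p.2 - x₀)) (𝓝 (t₀, x₀)) (𝓝 0) := by
    have h2 : Tendsto (fun p : ℝ × X => M * ‖p.2 - x₀‖) (𝓝 (t₀, x₀)) (𝓝 0) := by
      have : Continuous (fun p : ℝ × X => M * ‖p.2 - x₀‖) := by fun_prop
      simpa using this.tendsto (t₀, x₀)
    refine squeeze_zero_norm' ?_ h2
    have h3 : ∀ᶠ p : ℝ × X in 𝓝 (t₀, x₀), max p.1 0 < max t₀ 0 + 1 := by
      have : Continuous (fun p : ℝ × X => max p.1 0) := by fun_prop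
      exact (this.tendsto (t₀, x₀)).eventually_lt_const (by simp)
    filter_upwards [h3] with p hp
    exact (S (max p.1 0)).le_of_opNorm_le (hM _ ⟨le_max_right _ _, hp.le⟩) _
  have h2 : Tendsto (fun p : ℝ × X => S (max p.1 0) x₀) (𝓝 (t₀, x₀)) (𝓝 (S (max t₀ 0) x₀)) :=
    ((hS' x₀).comp continuous_fst).tendsto (t₀, x₀)
  have h3 := h1.add h2
  simp only [zero_add] at h3
  refine h3.congr ?_
  intro p
  simp

theorem RR_eq (β : ℝ) (hβ : 0 < β) (S : ℝ → X →L[ℂ] X) (t : ℝ) (ht : 0 ≤ t) (x : X) :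
    RR β S t x = (t ^ β / Real.Gamma β) •
      ∫ u in (0:ℝ)..1, u ^ (β - 1) • S (max (t * (1 - u)) 0) x := by
  unfold RR
  rcases ht.eq_or_lt with rfl | ht'
  · simp [Real.zero_rpow hβ.ne']
  have h1 := intervalIntegral.integral_comp_sub_left (a := 0) (b := t)
    (fun s => g β (t - s) • S s x) t
  simp only [sub_self, sub_zero, sub_sub_cancel] at h1
  rw [← h1]
  have h2 := intervalIntegral.integral_comp_mul_left (a := 0) (b := 1)
    (fun s => g β s • S (t - s) x) ht'.ne'
  simp only [mul_zero, mul_one] at h2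
  have h3 : ∫ s in (0:ℝ)..t, g β s • S (t - s) x =
    t • ∫ u in (0:ℝ)..1, g β (t * u) • S (t - t * u) x := by
    rw [h2, smul_smul, mul_inv_cancel₀ ht'.ne', one_smul]
  rw [h3, ← intervalIntegral.integral_smul, ← intervalIntegral.integral_smul]
  refine intervalIntegral.integral_congr ?_
  intro u hu
  rw [uIcc_of_le zero_le_one] at hu
  have e : t - t * u = max (t * (1 - u)) 0 := by
    rw [max_eq_left (mul_nonneg ht (by linarith [hu.2]))]; ring
  simp only [e, smul_smul, g]
  congr 1
  rw [Real.mul_rpow ht hu.1, Real.rpow_sub_one ht'.ne']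
  field_simp

theorem RR_joint [CompleteSpace X] (β : ℝ) (hβ : 0 < β) (S : ℝ → X →L[ℂ] X)
    (hS : ∀ x : X, ContinuousOn (fun t => S t x) (Ici (0:ℝ))) :
    Continuous (fun p : ℝ × X => RR β S (max p.1 0) p.2) := by
  have hJ := S_joint S hS
  have : (fun p : ℝ × X => RR β S (max p.1 0) p.2) = fun p : ℝ × X =>
      ((max p.1 0) ^ β / Real.Gamma β) •
      ∫ u in (0:ℝ)..1, u ^ (β - 1) • S (max (max p.1 0 * (1 - u)) 0) p.2 := by
    ext p
    exact RR_eq β hβ S _ (le_max_right _ _) _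
  rw [this]
  have hc1 : Continuous (fun p : ℝ × X => (max p.1 0) ^ β / Real.Gamma β) :=
    ((continuous_fst.max continuous_const).rpow_const (fun _ => Or.inr hβ.le)).div_const _
  refine hc1.smul ?_
  rw [continuous_iff_continuousAt]
  rintro ⟨t₀, x₀⟩
  obtain ⟨M, hM⟩ := S_bdd S hS (max t₀ 0 + 1)
  have hcS : ∀ u : ℝ, Continuous (fun p : ℝ × X => S (max (max p.1 0 * (1 - u)) 0) p.2) :=
    fun u => hJ.comp (f := fun p : ℝ × X => (max p.1 0 * (1 - u), p.2)) (by fun_prop)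
  have hcu : ∀ p : ℝ × X, Continuous (fun u : ℝ => S (max (max p.1 0 * (1 - u)) 0) p.2) :=
    fun p => hJ.comp (f := fun u : ℝ => (max p.1 0 * (1 - u), p.2)) (by fun_prop)
  have hint : IntervalIntegrable (fun u : ℝ => u ^ (β - 1)) volume 0 1 :=
    intervalIntegral.intervalIntegrable_rpow' (by linarith)
  refine intervalIntegral.continuousAt_of_dominated_interval
    (bound := fun u => u ^ (β - 1) * (M * (‖x₀‖ + 1))) ?_ ?_ ?_ ?_
  · refine Eventually.of_forall fun p => ?_
    exact ((by fun_prop : Measurable (fun u : ℝ => u ^ (β - 1))).aestronglyMeasurable).smul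
      (hcu p).aestronglyMeasurable
  · have h3 : ∀ᶠ p : ℝ × X in 𝓝 (t₀, x₀), max p.1 0 < max t₀ 0 + 1 := by
      have : Continuous (fun p : ℝ × X => max p.1 0) := by fun_prop
      exact (this.tendsto (t₀, x₀)).eventually_lt_const (by simp)
    have h4 : ∀ᶠ p : ℝ × X in 𝓝 (t₀, x₀), ‖p.2‖ < ‖x₀‖ + 1 := by
      have : Continuous (fun p : ℝ × X => ‖p.2‖) := by fun_prop
      exact (this.tendsto (t₀, x₀)).eventually_lt_const (by simp)
    filter_upwards [h3, h4] with p hp hp2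
    refine Eventually.of_forall fun u hu => ?_
    rw [uIoc_of_le zero_le_one] at hu
    have hu0 := Real.rpow_nonneg hu.1.le (β - 1)
    rw [norm_smul, Real.norm_of_nonneg hu0]
    have hm : max (max p.1 0 * (1 - u)) 0 ∈ Icc 0 (max t₀ 0 + 1) := by
      refine ⟨le_max_right _ _, max_le ?_ ?_⟩
      · have := le_max_right p.1 0
        nlinarith [hu.1]
      · have := le_max_right t₀ 0
        linarith
    have hMn : 0 ≤ M := (norm_nonneg _).trans (hM _ hm)
    have := (S (max (max p.1 0 * (1 - u)) 0)).le_of_opNorm_le (hM _ hm) p.2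
    gcongr
    exact this.trans (by gcongr)
  · exact hint.mul_const _
  · refine Eventually.of_forall fun u hu => ?_
    exact (continuous_const.smul (hcS u)).continuousAt

theorem int_g (β : ℝ) (hβ : 0 < β) (T : ℝ) :
    ∫ s in (0:ℝ)..T, g β s = g (β + 1) T := by
  unfold g
  rw [intervalIntegral.integral_div, integral_rpow (Or.inl (by linarith)), Real.Gamma_add_one hβ.ne']
  simp only [sub_add_cancel, add_sub_cancel_right, Real.zero_rpow hβ.ne', sub_zero]
  rw [div_div]

theorem g_int (β : ℝ) (hβ : 0 < β) (a b : ℝ) : IntervalIntegrable (g β) volume a b := by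
  unfold g
  exact (intervalIntegral.intervalIntegrable_rpow' (by linarith)).div_const _

theorem RR_prim [CompleteSpace X] (β : ℝ) (hβ : 0 < β) (S : ℝ → X →L[ℂ] X)
    (hS : ∀ x : X, ContinuousOn (fun t => S t x) (Ici (0:ℝ))) (T : ℝ) (hT : 0 ≤ T) (x : X) :
    ∫ τ in (0:ℝ)..T, RR β S τ x = RR (β + 1) S T x := by
  unfold RR
  rw [fubini_tri T hT (fun σ s => g β σ • S s x)]
  · refine intervalIntegral.integral_congr fun s _ => ?_
    beta_reduce
    rw [intervalIntegral.integral_smul_const, int_g β hβ]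
  · refine Integrable.smul_prod (f := g β) (g := fun s => S s x) ?_ ?_
    · exact (intervalIntegrable_iff_integrableOn_Ioc_of_le hT).1 (g_int β hβ 0 T)
    · exact (((hS x).mono Icc_subset_Ici_self).integrableOn_Icc).mono_set Ioc_subset_Icc_self

theorem mem_of_integral {E : Type*} [NormedAddCommGroup E] [NormedSpace ℂ E] [CompleteSpace E]
    (V : Submodule ℂ E) (hV : IsClosed (V : Set E)) (F : ℝ → E) (t : ℝ) (ht : 0 ≤ t)
    (hF : IntervalIntegrable F volume 0 t) (h : ∀ s ∈ Ioc 0 t, F s ∈ V) :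
    ∫ s in (0:ℝ)..t, F s ∈ V := by
  have := hV
  have h1 : V.mkQL (∫ s in (0:ℝ)..t, F s) = ∫ s in (0:ℝ)..t, V.mkQL (F s) :=
    (V.mkQL.intervalIntegral_comp_comm hF).symm
  have h2 : ∫ s in (0:ℝ)..t, V.mkQL (F s) = 0 := by
    rw [intervalIntegral.integral_of_le ht]
    rw [setIntegral_congr_fun (g := fun _ => 0) measurableSet_Ioc]
    · simp
    · intro s hs
      simpa using h s hs
  rw [h2] at h1
  simpa using h1

theorem mem_of_deriv {E : Type*} [NormedAddCommGroup E] [NormedSpace ℂ E]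
    (V : Submodule ℂ E) (hV : IsClosed (V : Set E)) (F : ℝ → E) (r t : ℝ) (hr : 0 < r)
    (ht : t ∈ Icc 0 r) (F' : E)
    (hF : HasDerivWithinAt F F' (Icc 0 r) t) (h : ∀ s ∈ Icc 0 r, F s ∈ V) : F' ∈ V := by
  rw [hasDerivWithinAt_iff_tendsto_slope] at hF
  have : (𝓝[Icc 0 r \ {t}] t).NeBot := by
    have := (uniqueDiffOn_Icc hr t ht).accPt
    rwa [accPt_principal_iff_nhdsWithin] at this
  refine hV.mem_of_tendsto hF ?_
  filter_upwards [self_mem_nhdsWithin] with s hs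
  rw [slope_def_module]
  exact V.smul_of_tower_mem _ (V.sub_mem (h s hs.1) (h t ht))

theorem mem_of_integral_pair [CompleteSpace X]
    (V : Submodule ℂ (X × X)) (hV : IsClosed (V : Set (X × X))) (F H : ℝ → X) (t : ℝ) (ht : 0 ≤ t)
    (hF : ContinuousOn F (Icc 0 t)) (hH : ContinuousOn H (Icc 0 t))
    (h : ∀ s ∈ Ioc 0 t, (F s, H s) ∈ V) :
    (∫ s in (0:ℝ)..t, F s, ∫ s in (0:ℝ)..t, H s) ∈ V := by
  have hFi := hF.intervalIntegrable_of_Icc (μ := volume) ht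
  have hHi := hH.intervalIntegrable_of_Icc (μ := volume) ht
  have h1 := mem_of_integral V hV (fun s => (F s, H s)) t ht
    ((hF.prodMk hH).intervalIntegrable_of_Icc ht) h
  rw [intervalIntegral.integral_of_le ht, integral_pair hFi.1 hHi.1] at h1
  rwa [intervalIntegral.integral_of_le ht, intervalIntegral.integral_of_le ht]

theorem RR_graph [CompleteSpace X] (α : ℝ) (hα1 : 1 < α)
    (A : X →ₗ.[ℂ] X) (hA_closed : IsClosed (A.graph : Set (X × X)))
    (hA_dense : Dense (A.domain : Set X))
    (S : ℝ → X →L[ℂ] X)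
    (hS_cont : ∀ x : X, ContinuousOn (fun t => S t x) (Ici (0:ℝ)))
    (hS_comm : ∀ t : ℝ, 0 ≤ t → ∀ x y : X, (x, y) ∈ A.graph → (S t x, S t y) ∈ A.graph)
    (hS_eq : ∀ t : ℝ, 0 ≤ t → ∀ x y : X, (x, y) ∈ A.graph →
      S t x = x + ∫ s in (0:ℝ)..t, g α (t - s) • S s y) (t : ℝ) (ht : 0 ≤ t) (x : X) :
    (RR α S t x, S t x - x) ∈ A.graph := by
  have hg : Continuous (fun s => g α (t - s)) := by
    unfold g
    exact (((continuous_const.sub continuous_id).rpow_const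
      (fun _ => Or.inr (by linarith))).div_const _)
  have hc : ∀ z, ContinuousOn (fun s => g α (t - s) • S s z) (Icc 0 t) := fun z =>
    hg.continuousOn.smul ((hS_cont z).mono Icc_subset_Ici_self)
  have hR : Continuous (fun x => RR α S t x) := by
    have := (RR_joint α (by linarith) S hS_cont).comp
      (f := fun x : X => (t, x)) (by fun_prop)
    simpa only [Function.comp_def, max_eq_left ht] using this
  have hcl : IsClosed {x | (RR α S t x, S t x - x) ∈ A.graph} :=
    hA_closed.preimage (hR.prodMk ((S t).continuous.sub continuous_id))
  have hsub : (A.domain : Set X) ⊆ {x | (RR α S t x, S t x - x) ∈ A.graph} := by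
    intro x hx
    have hxy : (x, A ⟨x, hx⟩) ∈ A.graph := A.mem_graph ⟨x, hx⟩
    have e : S t x - x = ∫ s in (0:ℝ)..t, g α (t - s) • S s (A ⟨x, hx⟩) := by
      rw [hS_eq t ht x _ hxy]; simp
    rw [mem_setOf_eq, e]
    refine mem_of_integral_pair A.graph hA_closed _ _ t ht (hc _) (hc _) ?_
    intro s hs
    exact A.graph.smul_of_tower_mem (g α (t - s)) (hS_comm s hs.1.le x _ hxy)
  exact (hcl.closure_subset_iff.2 hsub) (hA_dense x)

end helpers

theorem stmt_11
    {X : Type*} [NormedAddCommGroup X] [NormedSpace ℂ X] [CompleteSpace X]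
    (α : ℝ) (hα1 : 1 < α) (hα2 : α < 2)
    (A : X →ₗ.[ℂ] X) (hA_closed : IsClosed (A.graph : Set (X × X)))
    (hA_dense : Dense (A.domain : Set X))
    (S : ℝ → X →L[ℂ] X)
    (hS_cont : ∀ x : X, ContinuousOn (fun t => S t x) (Ici (0:ℝ)))
    (hS_zero : S 0 = 1)
    (hS_dom : ∀ t : ℝ, 0 ≤ t → ∀ x ∈ A.domain, S t x ∈ A.domain)
    (hS_comm : ∀ t : ℝ, 0 ≤ t → ∀ x y : X, (x, y) ∈ A.graph → (S t x, S t y) ∈ A.graph)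
    (hS_eq : ∀ t : ℝ, 0 ≤ t → ∀ x y : X, (x, y) ∈ A.graph →
      S t x = x + ∫ s in (0:ℝ)..t, g α (t - s) • S s y)
    (r : ℝ) (hr : 0 < r) (f : ℝ → X) (hf : ContinuousOn f (Icc 0 r))
    (D : ℝ → X) (hD_cont : ContinuousOn D (Icc 0 r))
    (hD : ∀ t ∈ Icc (0:ℝ) r,
      HasDerivWithinAt (fun τ => ∫ s in (0:ℝ)..τ, S (τ - s) (f s)) (D t) (Icc 0 r) t) :
    (∀ t ∈ Icc (0:ℝ) r,
      ((∫ s in (0:ℝ)..t, Pa α S (t - s) (f s)), D t - f t) ∈ A.graph) ∧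
    ContinuousOn (fun t => D t - f t) (Icc 0 r) := by
  refine ⟨?_, hD_cont.sub hf⟩
  have hβ : 0 < α - 1 := by linarith
  set fe : ℝ → X := fun s => f (max 0 (min s r)) with hfe
  have hfec : Continuous fe := hf.comp_continuous (by fun_prop)
    (fun s => ⟨le_max_left _ _, max_le hr.le (min_le_right _ _)⟩)
  have hfeq : ∀ s ∈ Icc 0 r, fe s = f s := by
    intro s hs
    simp only [hfe, min_eq_left hs.2, max_eq_right hs.1]
  set G : ℝ → ℝ → X := fun σ s => RR (α - 1) S (max σ 0) (fe s) with hG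
  have hGc : Continuous (fun p : ℝ × ℝ => G p.1 p.2) :=
    (RR_joint (α - 1) hβ S hS_cont).comp (f := fun p : ℝ × ℝ => (p.1, fe p.2)) (by fun_prop)
  set v : ℝ → X := fun τ => ∫ s in (0:ℝ)..τ, G (τ - s) s with hv
  have hvc : Continuous v := by
    have h1 : Continuous (Function.uncurry fun τ s : ℝ => G (τ - s) s) :=
      hGc.comp (f := fun p : ℝ × ℝ => (p.1 - p.2, p.2)) (by fun_prop)
    exact (intervalIntegral.continuous_parametric_primitive_of_continuous (μ := volume)
      (a₀ := 0) h1).comp (f := fun τ : ℝ => (τ, τ)) (by fun_prop)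
  have hveq : ∀ t ∈ Icc 0 r, ∫ s in (0:ℝ)..t, Pa α S (t - s) (f s) = v t := by
    intro t ht
    refine intervalIntegral.integral_congr fun s hs => ?_
    rw [uIcc_of_le ht.1] at hs
    simp only [hG]
    rw [hfeq s ⟨hs.1, hs.2.trans ht.2⟩, max_eq_left (by linarith [hs.2])]
    rfl
  have hQ := RR_graph α hα1 A hA_closed hA_dense S hS_cont hS_comm hS_eq
  have hW : ∀ t ∈ Icc 0 r, ∫ τ in (0:ℝ)..t, v τ = ∫ s in (0:ℝ)..t, RR α S (max (t - s) 0) (fe s) := by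
    intro t ht
    rw [hv, fubini_tri t ht.1 G]
    · refine intervalIntegral.integral_congr fun s hs => ?_
      rw [uIcc_of_le ht.1] at hs
      have hts : 0 ≤ t - s := by linarith [hs.2]
      have h1 := RR_prim (α - 1) hβ S hS_cont (t - s) hts (fe s)
      rw [sub_add_cancel] at h1
      beta_reduce
      rw [max_eq_left hts, ← h1]
      refine intervalIntegral.integral_congr fun σ hσ => ?_
      rw [uIcc_of_le hts] at hσ
      simp only [hG, max_eq_left hσ.1]
    · rw [Measure.prod_restrict]
      exact (hGc.continuousOn.integrableOn_compact (isCompact_Icc.prod isCompact_Icc)).mono_set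
        (prod_mono Ioc_subset_Icc_self Ioc_subset_Icc_self)
  have hmem : ∀ t ∈ Icc 0 r, (∫ τ in (0:ℝ)..t, v τ,
      (∫ s in (0:ℝ)..t, S (t - s) (f s)) - ∫ s in (0:ℝ)..t, fe s) ∈ A.graph := by
    intro t ht
    have c1 : Continuous (fun s => RR α S (max (t - s) 0) (fe s)) :=
      (RR_joint α (by linarith) S hS_cont).comp (f := fun s : ℝ => (t - s, fe s)) (by fun_prop)
    have c2 : Continuous (fun s => S (max (t - s) 0) (fe s)) :=
      (S_joint S hS_cont).comp (f := fun s : ℝ => (t - s, fe s)) (by fun_prop)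
    have e : ∫ s in (0:ℝ)..t, S (t - s) (f s) = ∫ s in (0:ℝ)..t, S (max (t - s) 0) (fe s) := by
      refine intervalIntegral.integral_congr fun s hs => ?_
      rw [uIcc_of_le ht.1] at hs
      beta_reduce
      rw [hfeq s ⟨hs.1, hs.2.trans ht.2⟩, max_eq_left (by linarith [hs.2])]
    rw [hW t ht, e, ← intervalIntegral.integral_sub (c2.intervalIntegrable _ _)
      (hfec.intervalIntegrable _ _)]
    refine mem_of_integral_pair A.graph hA_closed _ _ t ht.1 c1.continuousOn
      (c2.sub hfec).continuousOn ?_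
    intro s hs
    exact hQ _ (le_max_right _ _) _
  intro t ht
  rw [hveq t ht]
  refine mem_of_deriv A.graph hA_closed _ r t hr ht _ ?_ hmem
  have d1 := (hvc.integral_hasStrictDerivAt 0 t).hasDerivAt.hasDerivWithinAt (s := Icc 0 r)
  have d2 := (hfec.integral_hasStrictDerivAt 0 t).hasDerivAt.hasDerivWithinAt (s := Icc 0 r)
  rw [hfeq t ht] at d2
  exact d1.prodMk ((hD t ht).sub d2)
end

section
/- Let A generate an α-times resolvent family {S_α(t)}_{t≥0} on X, where 1 < α < 2, let r > 0, let f : [0,r] → X be continuous and x, y ∈ D(A). Then the following are equivalent: (a) the problem D_t^α u = Au + f on [0,r], u(0) = x, u'(0) = y has a strong solution; (b) t ↦ (S_α*f)(t) is continuously differentiable on [0,r]; (c) (P_α*f)(t) ∈ D(A) for all t ∈ [0,r] and t ↦ A((P_α*f)(t)) is continuous on [0,r]. -/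
open MeasureTheory Set

open Filter Topology intervalIntegral

namespace FracAux

section scalar

lemma g_integrable {a : ℝ} (ha : 0 < a) (p q : ℝ) : IntervalIntegrable (g a) volume p q := by
  unfold g
  exact (intervalIntegrable_rpow' (by linarith)).div_const _

lemma g_one (t : ℝ) : g 1 t = 1 := by simp [g]

lemma g_beta {a b t : ℝ} (ha : 0 < a) (hb : 0 < b) (ht : 0 < t) :
    ∫ s in (0:ℝ)..t, g a s * g b (t - s) = g (a + b) t := by
  have h1 := Complex.betaIntegral_scaled a b ht
  have h2 := Complex.Gamma_mul_Gamma_eq_betaIntegral (s := a) (t := b) (by simpa) (by simpa)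
  have hab : Real.Gamma (a + b) ≠ 0 := (Real.Gamma_pos_of_pos (by linarith)).ne'
  have hga : Real.Gamma a ≠ 0 := (Real.Gamma_pos_of_pos ha).ne'
  have hgb : Real.Gamma b ≠ 0 := (Real.Gamma_pos_of_pos hb).ne'
  have h3 : ∫ x in (0:ℝ)..t, (x:ℂ) ^ ((a:ℂ) - 1) * ((t:ℂ) - x) ^ ((b:ℂ) - 1)
      = ((∫ x in (0:ℝ)..t, x ^ (a - 1) * (t - x) ^ (b - 1) : ℝ) : ℂ) := by
    rw [← intervalIntegral.integral_ofReal]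
    apply intervalIntegral.integral_congr
    intro x hx
    rw [uIcc_of_le ht.le] at hx
    simp only
    push_cast
    rw [Complex.ofReal_cpow hx.1, Complex.ofReal_cpow (by linarith [hx.2])]
    push_cast
    rfl
  rw [h3] at h1
  rw [← Complex.ofReal_add, Complex.Gamma_ofReal, Complex.Gamma_ofReal, Complex.Gamma_ofReal] at h2
  have h4 : Complex.betaIntegral a b = ((Real.Gamma a * Real.Gamma b / Real.Gamma (a+b) : ℝ) : ℂ) := by
    push_cast
    rw [h2, mul_div_cancel_left₀]
    exact_mod_cast hab
  rw [h4] at h1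
  have h5 : (t:ℂ) ^ ((a:ℂ) + b - 1) = ((t ^ (a + b - 1) : ℝ) : ℂ) := by
    rw [Complex.ofReal_cpow ht.le]; push_cast; rfl
  rw [h5, ← Complex.ofReal_mul] at h1
  have h6 := Complex.ofReal_injective h1
  have h7 : ∀ s, g a s * g b (t - s) = (s ^ (a - 1) * (t - s) ^ (b - 1)) * (1 / (Real.Gamma a * Real.Gamma b)) := by
    intro s; unfold g; field_simp
  simp_rw [h7]
  rw [intervalIntegral.integral_mul_const, h6]
  unfold g
  field_simp

end scalar

section tri
variable {E : Type*} [NormedAddCommGroup E] [NormedSpace ℝ E]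

def Tri (t : ℝ) : Set (ℝ × ℝ) := {p | 0 < p.1 ∧ 0 < p.2 ∧ p.1 + p.2 ≤ t}

lemma measurableSet_tri (t : ℝ) : MeasurableSet (Tri t) := by
  unfold Tri
  refine (measurableSet_lt measurable_const measurable_fst).inter
    ((measurableSet_lt measurable_const measurable_snd).inter
    (measurableSet_le (measurable_fst.add measurable_snd) measurable_const))

lemma tri_aux (F : ℝ → ℝ → E) {t : ℝ} (ht : 0 ≤ t) :
    ∫ s in (0:ℝ)..t, ∫ τ in (0:ℝ)..(t - s), F s τ
      = ∫ s, ∫ τ, (Tri t).indicator (fun p => F p.1 p.2) (s, τ) := by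
  rw [intervalIntegral.integral_of_le ht, ← MeasureTheory.integral_indicator measurableSet_Ioc]
  congr 1
  ext s
  by_cases hs : s ∈ Ioc 0 t
  · rw [indicator_of_mem hs, intervalIntegral.integral_of_le (by linarith [hs.2]),
      ← MeasureTheory.integral_indicator measurableSet_Ioc]
    congr 1
    ext τ
    by_cases h : τ ∈ Ioc 0 (t - s)
    · rw [indicator_of_mem h, indicator_of_mem]
      exact ⟨hs.1, h.1, by linarith [h.2]⟩
    · rw [indicator_of_notMem h, indicator_of_notMem]
      rintro ⟨h1, h2, h3⟩
      exact h ⟨h2, by simp only at h3; linarith⟩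
  · rw [indicator_of_notMem hs]
    have : ∀ τ, (Tri t).indicator (fun p => F p.1 p.2) (s, τ) = 0 := by
      intro τ
      rw [indicator_of_notMem]
      rintro ⟨h1, h2, h3⟩
      exact hs ⟨h1, by simp only at h2 h3; linarith⟩
    simp [this]

lemma tri_swap (F : ℝ → ℝ → E) {t : ℝ} (ht : 0 ≤ t)
    (hF : IntegrableOn (fun p : ℝ × ℝ => F p.1 p.2) (Tri t)) :
    ∫ s in (0:ℝ)..t, ∫ τ in (0:ℝ)..(t - s), F s τ
      = ∫ τ in (0:ℝ)..t, ∫ s in (0:ℝ)..(t - τ), F s τ := by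
  rw [tri_aux F ht, tri_aux (fun τ s => F s τ) ht, integral_integral_swap]
  · congr 1; ext τ; congr 1; ext s
    have : (s, τ) ∈ Tri t ↔ (τ, s) ∈ Tri t := by
      simp only [Tri, mem_ofPred_eq, add_comm s τ]; tauto
    by_cases h : (s, τ) ∈ Tri t
    · rw [indicator_of_mem h, indicator_of_mem (this.1 h)]
    · rw [indicator_of_notMem h, indicator_of_notMem (mt this.2 h)]
  · exact (integrable_indicator_iff (measurableSet_tri t)).2 hF

lemma tri_bdd (h : ℝ × ℝ → E) (hh : Continuous h) (t : ℝ) :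
    ∃ C, ∀ p ∈ Tri t, ‖h p‖ ≤ C := by
  obtain ⟨C, hC⟩ := ((isCompact_Icc (a := (0:ℝ)) (b := t)).prod
    (isCompact_Icc (a := (0:ℝ)) (b := t))).exists_bound_of_continuousOn hh.continuousOn
  refine ⟨C, fun p hp => hC p ?_⟩
  obtain ⟨h1, h2, h3⟩ := hp
  exact ⟨⟨h1.le, by linarith⟩, ⟨h2.le, by linarith⟩⟩

lemma tri_int_cont {k : ℝ → ℝ} {t : ℝ} (hk : IntervalIntegrable k volume 0 t) (ht : 0 ≤ t)
    (H : ℝ × ℝ → E) (hH : Continuous H) :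
    IntegrableOn (fun p : ℝ × ℝ => k p.1 • H p) (Tri t) := by
  have hk' := (intervalIntegrable_iff_integrableOn_Ioc_of_le ht).1 hk
  have h1 : IntegrableOn (fun p : ℝ × ℝ => k p.1) (Ioc 0 t ×ˢ Ioc 0 t) := by
    rw [IntegrableOn, Measure.volume_eq_prod, ← Measure.prod_restrict]
    exact hk'.comp_fst _
  have h2 : IntegrableOn (fun p : ℝ × ℝ => k p.1) (Tri t) := by
    refine h1.mono_set ?_
    rintro p ⟨h1, h2, h3⟩
    exact ⟨⟨h1, by linarith⟩, ⟨h2, by linarith⟩⟩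
  obtain ⟨C, hC⟩ := tri_bdd H hH t
  exact Integrable.smul_bdd h2 C hH.aestronglyMeasurable
    ((ae_restrict_iff' (measurableSet_tri t)).2 (ae_of_all _ hC))

lemma tri_int_conv {k l : ℝ → ℝ} {t : ℝ} (hk : IntervalIntegrable k volume 0 t)
    (hl : IntervalIntegrable l volume 0 t) (ht : 0 ≤ t)
    (h : ℝ → E) (hh : Continuous h) :
    IntegrableOn (fun p : ℝ × ℝ => k p.1 • l (t - p.1 - p.2) • h p.2) (Tri t) := by
  have hk' := (integrable_indicator_iff measurableSet_Icc).2
    ((intervalIntegrable_iff_integrableOn_Icc_of_le ht).1 hk)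
  have hl' := (integrable_indicator_iff measurableSet_Icc).2
    ((intervalIntegrable_iff_integrableOn_Icc_of_le ht).1 hl)
  have h1 := Integrable.convolution_integrand (ContinuousLinearMap.mul ℝ ℝ) hk' hl'
  have mp : MeasurePreserving (fun p : ℝ × ℝ => (t - p.2, p.1)) (volume.prod volume) (volume.prod volume) := by
    have e1 : MeasurePreserving (fun x : ℝ => t - x) volume volume := Measure.measurePreserving_sub_left volume t
    have e2 := e1.prod (MeasurePreserving.id (volume : Measure ℝ))
    exact e2.comp Measure.measurePreserving_swap
  have h2 := mp.integrable_comp_of_integrable h1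
  obtain ⟨C, hC⟩ := tri_bdd (fun p => h p.2) (hh.comp continuous_snd) t
  have h3 := Integrable.smul_bdd (h2.integrableOn (s := Tri t)) C 
    (hh.comp continuous_snd).aestronglyMeasurable
    ((ae_restrict_iff' (measurableSet_tri t)).2 (ae_of_all _ hC))
  refine (integrableOn_congr_fun ?_ (measurableSet_tri t)).1 h3
  rintro p ⟨h1, h2, h3⟩
  have a1 : p.1 ∈ Icc 0 t := ⟨h1.le, by linarith⟩
  have a2 : t - p.2 - p.1 ∈ Icc 0 t := ⟨by linarith, by linarith⟩
  simp [indicator_of_mem a1, indicator_of_mem a2, smul_smul]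
  rw [show t - p.2 - p.1 = t - p.1 - p.2 by ring]

lemma cont_param {P : Type*} [TopologicalSpace P] [FirstCountableTopology P] {k : ℝ → ℝ}
    (hk : IntervalIntegrable k volume 0 1) (H : P → ℝ → E) (hH : Continuous (Function.uncurry H)) :
    Continuous (fun p => ∫ v in (0:ℝ)..1, k v • H p v) := by
  rw [continuous_iff_continuousAt]
  intro p₀
  have hHp : ∀ p, Continuous (H p) := fun p => hH.comp (Continuous.prodMk_right p)
  obtain ⟨C, hC⟩ := (isCompact_Icc (a := (0:ℝ)) (b := 1)).exists_bound_of_continuousOn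
    (hHp p₀).continuousOn
  obtain ⟨u, v, hu, hv, hpu, hv1, huv⟩ := generalized_tube_lemma (isCompact_singleton (x := p₀))
    (isCompact_Icc (a := (0:ℝ)) (b := 1)) (n := {q | ‖Function.uncurry H q‖ < C + 1})
    (isOpen_lt hH.norm continuous_const) (by
      rintro ⟨p, s⟩ ⟨hp, hs⟩
      have hp' : p = p₀ := hp
      subst hp'
      have := hC s hs
      simp only [mem_ofPred_eq, Function.uncurry]
      linarith)
  refine continuousAt_of_dominated_interval (bound := fun v => ‖k v‖ * (C + 1)) ?_ ?_ ?_ ?_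
  · refine Eventually.of_forall fun p => ?_
    rw [uIoc_of_le zero_le_one]
    exact hk.1.aestronglyMeasurable.smul (hHp p).aestronglyMeasurable
  · filter_upwards [hu.mem_nhds (hpu rfl)] with p hp
    refine ae_of_all _ fun s hs => ?_
    rw [uIoc_of_le zero_le_one] at hs
    rw [norm_smul]
    gcongr
    exact (huv (show (p, s) ∈ u ×ˢ v from ⟨hp, hv1 ⟨hs.1.le, hs.2⟩⟩)).le
  · exact hk.norm.mul_const _
  · refine ae_of_all _ fun s hs => ?_
    exact (continuous_const.smul (hH.comp (Continuous.prodMk_left s))).continuousAt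

end tri

section J
variable {E : Type*} [NormedAddCommGroup E] [NormedSpace ℝ E]

noncomputable def J (a : ℝ) (h : ℝ → E) (t : ℝ) : E :=
  t ^ a • ∫ v in (0:ℝ)..1, g a v • h (t * (1 - v))

lemma J_cont {a : ℝ} (ha : 0 < a) {h : ℝ → E} (hh : Continuous h) : Continuous (J a h) := by
  unfold J
  refine (Real.continuous_rpow_const ha.le).smul ?_
  exact cont_param (g_integrable ha 0 1) (fun t v => h (t * (1 - v))) (by fun_prop)

lemma J_zero {a : ℝ} (ha : 0 < a) (h : ℝ → E) : J a h 0 = 0 := by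
  simp [J, Real.zero_rpow ha.ne']

lemma J_eq' {a : ℝ} (ha : 0 < a) (h : ℝ → E) {t : ℝ} (ht : 0 ≤ t) :
    J a h t = ∫ s in (0:ℝ)..t, g a s • h (t - s) := by
  rcases ht.eq_or_lt with rfl | ht
  · simp [J_zero ha]
  have := smul_integral_comp_mul_left (a := 0) (b := 1) (fun s => g a s • h (t - s)) t
  rw [mul_zero, mul_one] at this
  rw [← this, J]
  have h2 : t ^ a = t * t ^ (a - 1) := by
    rw [Real.rpow_sub_one ht.ne']; field_simp
  rw [h2, mul_smul, ← intervalIntegral.integral_smul]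
  congr 1
  apply intervalIntegral.integral_congr
  intro v hv
  rw [uIcc_of_le zero_le_one] at hv
  simp only [g]
  rw [Real.mul_rpow ht.le hv.1, smul_smul, mul_div_assoc, mul_sub, mul_one]

lemma J_eq {a : ℝ} (ha : 0 < a) (h : ℝ → E) {t : ℝ} (ht : 0 ≤ t) :
    J a h t = ∫ s in (0:ℝ)..t, g a (t - s) • h s := by
  rw [J_eq' ha h ht]
  have := integral_comp_sub_left (a := 0) (b := t) (fun s => g a s • h (t - s)) t
  simpa using this.symm

lemma J_congr {a t : ℝ} {h h' : ℝ → E} (ht : 0 ≤ t) (H : ∀ s ∈ Icc 0 t, h s = h' s) :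
    J a h t = J a h' t := by
  unfold J
  congr 1
  apply intervalIntegral.integral_congr
  intro v hv
  rw [uIcc_of_le zero_le_one] at hv
  simp only
  rw [H]
  constructor
  · exact mul_nonneg ht (by linarith [hv.2])
  · nlinarith [hv.1]

lemma J_intb {a t : ℝ} (ha : 0 < a) {h : ℝ → E} (hh : Continuous h) :
    IntervalIntegrable (fun v => g a v • h (t * (1 - v))) volume 0 1 :=
  (g_integrable ha 0 1).smul_continuousOn (by fun_prop)

lemma J_add {a t : ℝ} (ha : 0 < a) {h h' : ℝ → E} (hh : Continuous h) (hh' : Continuous h') :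
    J a (fun s => h s + h' s) t = J a h t + J a h' t := by
  unfold J
  rw [← smul_add, ← intervalIntegral.integral_add (J_intb ha hh) (J_intb ha hh')]
  simp only [smul_add]

lemma J_one {h : ℝ → E} {t : ℝ} (ht : 0 ≤ t) : J 1 h t = ∫ s in (0:ℝ)..t, h s := by
  rw [J_eq one_pos h ht]; simp [g_one]

lemma J_one_const [CompleteSpace E] (c : E) {t : ℝ} (ht : 0 ≤ t) : J 1 (fun _ => c) t = t • c := by
  rw [J_one ht]; simp

lemma J_one_deriv [CompleteSpace E] {h : ℝ → E} (hh : Continuous h) {r t : ℝ} (ht : t ∈ Icc 0 r) :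
    HasDerivWithinAt (J 1 h) (h t) (Icc 0 r) t := by
  refine ((hh.integral_hasStrictDerivAt 0 t).hasDerivAt.hasDerivWithinAt (s := Icc 0 r)).congr ?_ ?_
  · intro s hs; exact J_one hs.1
  · exact J_one ht.1

lemma J_J [CompleteSpace E] {a b : ℝ} (ha : 0 < a) (hb : 0 < b) {h : ℝ → E} (hh : Continuous h) {t : ℝ}
    (ht : 0 ≤ t) : J a (J b h) t = J (a + b) h t := by
  rw [J_eq' ha _ ht, J_eq (add_pos ha hb) _ ht]
  have e1 : ∫ s in (0:ℝ)..t, g a s • J b h (t - s)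
      = ∫ s in (0:ℝ)..t, ∫ σ in (0:ℝ)..(t - s), g a s • g b (t - s - σ) • h σ := by
    apply intervalIntegral.integral_congr
    intro s hs
    rw [uIcc_of_le ht] at hs
    simp only
    rw [J_eq hb h (by linarith [hs.2]), intervalIntegral.integral_smul]
  rw [e1, tri_swap (fun s σ => g a s • g b (t - s - σ) • h σ) ht
    (tri_int_conv (g_integrable ha 0 t) (g_integrable hb 0 t) ht h hh)]
  apply intervalIntegral.integral_congr_ae
  have : ∀ᵐ x : ℝ, x ≠ t := Measure.ae_ne volume t
  filter_upwards [this] with σ hσ hσ2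
  rw [uIoc_of_le ht] at hσ2
  have hpos : 0 < t - σ := sub_pos.2 (lt_of_le_of_ne hσ2.2 hσ)
  rw [← g_beta ha hb hpos, ← intervalIntegral.integral_smul_const]
  congr 1; ext s
  rw [smul_smul, show t - s - σ = t - σ - s by ring]

lemma J_J' [CompleteSpace E] {a b c : ℝ} (ha : 0 < a) (hb : 0 < b) (hc : a + b = c)
    {h : ℝ → E} (hh : Continuous h) {t : ℝ}
    (ht : 0 ≤ t) : J a (J b h) t = J c h t := by
  rw [← hc]; exact J_J ha hb hh ht

/-- antiderivative -/
lemma eq_J_one [CompleteSpace E] {p q : ℝ → E} (hq : Continuous q) {r : ℝ}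
    (hd : ∀ t ∈ Icc 0 r, HasDerivWithinAt p (q t) (Icc 0 r) t) :
    ∀ t ∈ Icc 0 r, p t = p 0 + J 1 q t := by
  intro t ht
  rw [J_one ht.1, integral_eq_sub_of_hasDerivAt_of_le (f := p) ht.1 _ _ (hq.intervalIntegrable _ _)]
  · abel
  · intro s hs
    exact ((hd s ⟨hs.1, hs.2.trans ht.2⟩).continuousWithinAt).mono (Icc_subset_Icc le_rfl ht.2)
  · intro s hs
    exact (hd s ⟨hs.1.le, hs.2.le.trans ht.2⟩).hasDerivAt (Icc_mem_nhds hs.1 (hs.2.trans_le ht.2))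

lemma deriv_unique {p p' : ℝ → E} {d d' : E} {r t : ℝ} (hr : 0 < r) (ht : t ∈ Icc 0 r)
    (h : HasDerivWithinAt p d (Icc 0 r) t) (h' : HasDerivWithinAt p' d' (Icc 0 r) t)
    (hpp : ∀ s ∈ Icc 0 r, p s = p' s) : d = d' :=
  (uniqueDiffOn_Icc hr t ht).eq_deriv _ h (h'.congr hpp (hpp t ht))

lemma J_one_inj [CompleteSpace E] {h h' : ℝ → E} (hh : Continuous h) (hh' : Continuous h') {r : ℝ}
    (hr : 0 < r) (H : ∀ t ∈ Icc 0 r, J 1 h t = J 1 h' t) : ∀ t ∈ Icc 0 r, h t = h' t := fun _ ht =>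
  deriv_unique hr ht (J_one_deriv hh ht) (J_one_deriv hh' ht) H

end J

section graph
variable {X : Type*} [NormedAddCommGroup X] [NormedSpace ℂ X] [CompleteSpace X]

lemma int_mem {E : Type*} [NormedAddCommGroup E] [NormedSpace ℂ E] [CompleteSpace E]
    (G : Submodule ℂ E) (hG : IsClosed (G : Set E))
    {φ : ℝ → E} {a b : ℝ} (hab : a ≤ b) (hφ : IntervalIntegrable φ volume a b)
    (hm : ∀ s ∈ Icc a b, φ s ∈ G) : ∫ s in a..b, φ s ∈ G := by
  have : IsClosed (G : Set E) := hG
  have h1 := G.mkQL.intervalIntegral_comp_comm hφ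
  have h2 : ∫ s in a..b, G.mkQL (φ s) = ∫ s in a..b, (0 : E ⧸ G) := by
    apply intervalIntegral.integral_congr
    intro s hs
    rw [uIcc_of_le hab] at hs
    simpa using hm s hs
  rw [h2] at h1
  have h3 : G.mkQL (∫ s in a..b, φ s) = 0 := by rw [← h1]; simp
  simpa using h3

lemma pair_mem (G : Submodule ℂ (X × X)) (hG : IsClosed (G : Set (X × X)))
    {φ ψ : ℝ → X} {a b : ℝ} (hab : a ≤ b) (hφ : IntervalIntegrable φ volume a b)
    (hψ : IntervalIntegrable ψ volume a b)
    (hm : ∀ s ∈ Icc a b, (φ s, ψ s) ∈ G) : (∫ s in a..b, φ s, ∫ s in a..b, ψ s) ∈ G := by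
  have hp : IntervalIntegrable (fun s => (φ s, ψ s)) volume a b :=
    ⟨hφ.1.prodMk hψ.1, hφ.2.prodMk hψ.2⟩
  have := int_mem G hG hab hp hm
  have e1 := (ContinuousLinearMap.fst ℝ X X).intervalIntegral_comp_comm hp
  have e2 := (ContinuousLinearMap.snd ℝ X X).intervalIntegral_comp_comm hp
  simp only [ContinuousLinearMap.coe_fst', ContinuousLinearMap.coe_snd'] at e1 e2
  rw [e1, e2]
  exact this

lemma J_mem (G : Submodule ℂ (X × X)) (hG : IsClosed (G : Set (X × X))) {a t : ℝ} (ha : 0 < a)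
    (ht : 0 ≤ t) {h h' : ℝ → X} (hh : Continuous h) (hh' : Continuous h')
    (hm : ∀ s ∈ Icc 0 t, (h s, h' s) ∈ G) : (J a h t, J a h' t) ∈ G := by
  have h1 := pair_mem G hG (φ := fun v => g a v • h (t * (1 - v))) 
    (ψ := fun v => g a v • h' (t * (1 - v))) zero_le_one (J_intb ha hh) (J_intb ha hh') (by
      intro v hv
      have := G.smul_mem ((g a v : ℝ) : ℂ) (hm (t * (1 - v)) 
        ⟨mul_nonneg ht (by linarith [hv.2]), by nlinarith [hv.1]⟩)
      simpa using this)
  have := G.smul_mem (((t ^ a : ℝ)) : ℂ) h1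
  rw [Prod.smul_mk, Complex.coe_smul, Complex.coe_smul] at this
  exact this

lemma deriv_mem (G : Submodule ℂ (X × X)) (hG : IsClosed (G : Set (X × X)))
    {p q : ℝ → X} {p' q' : X} {r t : ℝ} (hr : 0 < r) (ht : t ∈ Icc 0 r)
    (hp : HasDerivWithinAt p p' (Icc 0 r) t) (hq : HasDerivWithinAt q q' (Icc 0 r) t)
    (hm : ∀ s ∈ Icc 0 r, (p s, q s) ∈ G) : (p', q') ∈ G := by
  have h := hp.prodMk hq
  rw [hasDerivWithinAt_iff_tendsto_slope] at h
  have : (𝓝[Icc 0 r \ {t}] t).NeBot := by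
    have := (uniqueDiffOn_Icc hr t ht)
    exact mem_closure_iff_nhdsWithin_neBot.1 (by simpa [accPt_principal_iff_clusterPt, mem_closure_iff_clusterPt] using this.accPt)
  refine hG.mem_of_tendsto h ?_
  filter_upwards [self_mem_nhdsWithin] with s hs
  have := G.smul_mem (((s - t)⁻¹ : ℝ) : ℂ) (G.sub_mem (hm s hs.1) (hm t ht))
  rw [Complex.coe_smul] at this
  exact this

end graph

section K
variable {X : Type*} [NormedAddCommGroup X] [NormedSpace ℂ X]

noncomputable def K (S : ℝ → X →L[ℂ] X) (h : ℝ → X) (t : ℝ) : X :=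
  ∫ s in (0:ℝ)..t, S (t - s) (h s)

lemma joint_cont [CompleteSpace X] {S : ℝ → X →L[ℂ] X} (hS : ∀ x, Continuous (fun t => S t x)) :
    Continuous (fun p : ℝ × X => S p.1 p.2) := by
  rw [continuous_iff_continuousAt]
  rintro ⟨t₀, x₀⟩
  obtain ⟨C, hC⟩ := banach_steinhaus (g := fun i : Icc (t₀ - 1) (t₀ + 1) => S i) (by
    intro x
    obtain ⟨C, hC⟩ := (isCompact_Icc (a := t₀ - 1) (b := t₀ + 1)).exists_bound_of_continuousOn
      (hS x).continuousOn
    exact ⟨C, fun i => hC i i.2⟩)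
  have h1 : Tendsto (fun p : ℝ × X => S p.1 (p.2 - x₀)) (𝓝 (t₀, x₀)) (𝓝 0) := by
    have h3 : Tendsto (fun p : ℝ × X => C * ‖p.2 - x₀‖) (𝓝 (t₀, x₀)) (𝓝 0) := by
      have : Continuous (fun p : ℝ × X => C * ‖p.2 - x₀‖) := by fun_prop
      simpa using this.tendsto (t₀, x₀)
    refine squeeze_zero_norm' ?_ h3
    have h4 : ∀ᶠ p : ℝ × X in 𝓝 (t₀, x₀), p.1 ∈ Icc (t₀ - 1) (t₀ + 1) :=
      continuous_fst.continuousAt.eventually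
        (Icc_mem_nhds (by simp) (by simp))
    filter_upwards [h4] with p hp
    exact (S p.1).le_of_opNorm_le (hC ⟨p.1, hp⟩) _
  have h2 : Tendsto (fun p : ℝ × X => S p.1 x₀) (𝓝 (t₀, x₀)) (𝓝 (S t₀ x₀)) :=
    ((hS x₀).comp continuous_fst).tendsto (t₀, x₀)
  have h5 := h1.add h2
  rw [zero_add] at h5
  refine h5.congr fun p => ?_
  simp

variable {S : ℝ → X →L[ℂ] X} (hS : Continuous (fun p : ℝ × X => S p.1 p.2))

include hS

lemma S_cont {u : ℝ → ℝ} {h : ℝ → X} (hu : Continuous u) (hh : Continuous h) :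
    Continuous (fun s => S (u s) (h s)) := hS.comp (hu.prodMk hh)

lemma K_cont {h : ℝ → X} (hh : Continuous h) : Continuous (K S h) := by
  unfold K
  refine continuous_parametric_intervalIntegral_of_continuous 
    (f := fun t s => S (t - s) (h s)) ?_ continuous_id
  exact hS.comp ((by fun_prop : Continuous fun p : ℝ × ℝ => p.1 - p.2).prodMk 
    (hh.comp continuous_snd))

omit hS in
lemma K_eq' (h : ℝ → X) (t : ℝ) : K S h t = ∫ s in (0:ℝ)..t, S s (h (t - s)) := by
  have := integral_comp_sub_left (a := 0) (b := t) (fun s => S s (h (t - s))) t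
  simpa [K] using this

omit hS in
lemma K_congr {t : ℝ} {h h' : ℝ → X} (ht : 0 ≤ t) (H : ∀ s ∈ Icc 0 t, h s = h' s) :
    K S h t = K S h' t := by
  unfold K
  apply intervalIntegral.integral_congr
  intro v hv
  rw [uIcc_of_le ht] at hv
  simp only
  rw [H v hv]

lemma K_add {t : ℝ} {h h' : ℝ → X} (hh : Continuous h) (hh' : Continuous h') :
    K S (fun s => h s + h' s) t = K S h t + K S h' t := by
  unfold K
  rw [← intervalIntegral.integral_add]
  · simp only [map_add]
  · exact (S_cont hS (by fun_prop) hh).intervalIntegrable _ _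
  · exact (S_cont hS (by fun_prop) hh').intervalIntegrable _ _

omit hS in
lemma K_const (x : X) {t : ℝ} (ht : 0 ≤ t) : K S (fun _ => x) t = J 1 (fun s => S s x) t := by
  rw [K_eq', J_one ht]

variable [CompleteSpace X]

lemma K_mem (G : Submodule ℂ (X × X)) (hG : IsClosed (G : Set (X × X))) {t : ℝ} 
    (ht : 0 ≤ t) {h h' : ℝ → X} (hh : Continuous h) (hh' : Continuous h')
    (hm : ∀ s ∈ Icc 0 t, (S (t - s) (h s), S (t - s) (h' s)) ∈ G) : (K S h t, K S h' t) ∈ G :=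
  pair_mem G hG ht ((S_cont hS (by fun_prop) hh).intervalIntegrable _ _)
    ((S_cont hS (by fun_prop) hh').intervalIntegrable _ _) hm

/-- `g_a * (S * h) = (g_a * S) * h` -/
lemma J_K {a t : ℝ} (ha : 0 < a) (ht : 0 ≤ t) {h : ℝ → X} (hh : Continuous h) :
    J a (K S h) t = ∫ s in (0:ℝ)..t, J a (fun σ => S σ (h s)) (t - s) := by
  rw [J_eq' ha _ ht]
  have hH : Continuous (fun p : ℝ × ℝ => S (t - p.1 - p.2) (h p.2)) :=
    hS.comp ((by fun_prop : Continuous fun p : ℝ × ℝ => t - p.1 - p.2).prodMk 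
    (hh.comp continuous_snd))
  have h1 := tri_swap (fun s τ => g a s • S (t - s - τ) (h τ)) ht
    (tri_int_cont (g_integrable ha 0 t) ht _ hH)
  simp only [intervalIntegral.integral_smul] at h1
  unfold K
  rw [h1]
  apply intervalIntegral.integral_congr
  intro s hs
  rw [uIcc_of_le ht] at hs
  simp only
  rw [J_eq' ha _ (by linarith [hs.2])]
  congr 1; ext τ
  rw [show t - τ - s = t - s - τ by ring]

/-- `g_a * (S * h) = S * (g_a * h)` -/
lemma K_J {a t : ℝ} (ha : 0 < a) (ht : 0 ≤ t) {h : ℝ → X} (hh : Continuous h) :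
    K S (J a h) t = J a (K S h) t := by
  rw [J_eq' ha _ ht, K_eq']
  simp only [K_eq']
  have hH : Continuous (fun p : ℝ × ℝ => S p.2 (h (t - p.1 - p.2))) :=
    hS.comp (continuous_snd.prodMk (hh.comp (by fun_prop)))
  have h1 := tri_swap (fun s τ => g a s • S τ (h (t - s - τ))) ht
    (tri_int_cont (g_integrable ha 0 t) ht _ hH)
  simp only [intervalIntegral.integral_smul] at h1
  rw [h1]
  apply intervalIntegral.integral_congr
  intro s hs
  rw [uIcc_of_le ht] at hs
  simp only
  rw [J_eq' ha _ (by linarith [hs.2])]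
  rw [← ContinuousLinearMap.intervalIntegral_comp_comm]
  · congr 1; ext τ
    rw [← Complex.coe_smul, map_smul, Complex.coe_smul, show t - τ - s = t - s - τ by ring]
  · exact (g_integrable ha _ _).smul_continuousOn (by fun_prop)

lemma resolvent_mem {α : ℝ} (hα : 0 < α) (A : X →ₗ.[ℂ] X) 
    (hA : IsClosed (A.graph : Set (X × X))) (hD : Dense (A.domain : Set X))
    (hcomm : ∀ t : ℝ, 0 ≤ t → ∀ x y : X, (x, y) ∈ A.graph → (S t x, S t y) ∈ A.graph)
    (heq : ∀ t : ℝ, 0 ≤ t → ∀ x y : X, (x, y) ∈ A.graph →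
      S t x = x + J α (fun s => S s y) t) {t : ℝ} (ht : 0 ≤ t) (x : X) :
    (J α (fun s => S s x) t, S t x - x) ∈ A.graph := by
  have hc : Continuous (fun x : X => (J α (fun s => S s x) t, S t x - x)) := by
    refine Continuous.prodMk ?_ (by fun_prop)
    unfold J
    refine continuous_const.smul ?_
    exact cont_param (g_integrable hα 0 1) (fun (x : X) v => S (t * (1 - v)) x)
      (hS.comp ((by fun_prop : Continuous fun p : X × ℝ => t * (1 - p.2)).prodMk continuous_fst))
  have hcl := hA.preimage hc
  have hsub : (A.domain : Set X) ⊆ (fun x : X => (J α (fun s => S s x) t, S t x - x)) ⁻¹' A.graph := by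
    intro x hx
    have hxy : (x, A ⟨x, hx⟩) ∈ A.graph := A.mem_graph ⟨x, hx⟩
    have h1 := heq t ht _ _ hxy
    show (J α (fun s => S s x) t, S t x - x) ∈ A.graph
    rw [h1, add_sub_cancel_left]
    exact J_mem _ hA hα ht (S_cont hS continuous_id continuous_const)
      (S_cont hS continuous_id continuous_const) (fun s hs => hcomm s hs.1 _ _ hxy)
  have := hcl.closure_subset_iff.2 hsub
  rw [hD.closure_eq] at this
  exact this (mem_univ x)

/-- `A (g_α * S * h) = S * h - 1 * h` -/
lemma main_mem {α : ℝ} (hα : 0 < α) (A : X →ₗ.[ℂ] X) 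
    (hA : IsClosed (A.graph : Set (X × X))) 
    (hres : ∀ t : ℝ, 0 ≤ t → ∀ x : X, (J α (fun s => S s x) t, S t x - x) ∈ A.graph)
    {h : ℝ → X} (hh : Continuous h) {t : ℝ} (ht : 0 ≤ t) :
    (J α (K S h) t, K S h t - J 1 h t) ∈ A.graph := by
  rw [J_K hS hα ht hh, J_one ht, K, ← intervalIntegral.integral_sub
    ((S_cont hS (by fun_prop) hh).intervalIntegrable _ _) (hh.intervalIntegrable _ _)]
  refine pair_mem _ hA ht ?_ ?_ ?_
  · apply Continuous.intervalIntegrable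
    unfold J
    refine ((Real.continuous_rpow_const hα.le).comp (by fun_prop)).smul ?_
    exact cont_param (g_integrable hα 0 1) (fun s v => S ((t - s) * (1 - v)) (h s))
      (hS.comp ((by fun_prop : Continuous fun p : ℝ × ℝ => (t - p.1) * (1 - p.2)).prodMk
        (hh.comp continuous_fst)))
  · exact ((S_cont hS (by fun_prop) hh).sub hh).intervalIntegrable _ _
  · intro s hs
    exact hres (t - s) (by linarith [hs.2]) (h s)

end K

section core
variable {X : Type*} [NormedAddCommGroup X] [NormedSpace ℂ X] [CompleteSpace X]

omit [NormedSpace ℂ X] [CompleteSpace X] in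
lemma exists_ext {r : ℝ} (hr : 0 < r) {q : ℝ → X} (hq : ContinuousOn q (Icc 0 r)) :
    ∃ q' : ℝ → X, Continuous q' ∧ ∀ t ∈ Icc 0 r, q' t = q t := by
  refine ⟨IccExtend hr.le ((Icc 0 r).restrict q), hq.restrict.Icc_extend', fun t ht => ?_⟩
  rw [IccExtend_of_mem _ _ ht]; rfl

omit [NormedSpace ℂ X] [CompleteSpace X] in
lemma cadd {p q : ℝ → X} (hp : Continuous p) (hq : Continuous q) :
    Continuous (fun s => p s + q s) := hp.add hq

variable {α : ℝ} (hα1 : 1 < α) (hα2 : α < 2) {A : X →ₗ.[ℂ] X}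
    (hA : IsClosed (A.graph : Set (X × X)))
    {S : ℝ → X →L[ℂ] X} (hS : Continuous (fun p : ℝ × X => S p.1 p.2))
    (hcomm : ∀ t : ℝ, 0 ≤ t → ∀ x y : X, (x, y) ∈ A.graph → (S t x, S t y) ∈ A.graph)
    (heq : ∀ t : ℝ, 0 ≤ t → ∀ x y : X, (x, y) ∈ A.graph →
      S t x = x + J α (fun s => S s y) t)
    (hres : ∀ t : ℝ, 0 ≤ t → ∀ x : X, (J α (fun s => S s x) t, S t x - x) ∈ A.graph)
    {r : ℝ} (hr : 0 < r) {f : ℝ → X} (hf : Continuous f)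

include hα1 hA hS hres in
lemma c_to_eq {w : ℝ → X} (hw : Continuous w)
    (h : ∀ t ∈ Icc 0 r, (J (α - 1) (K S f) t, w t) ∈ A.graph) (hf : Continuous f) :
    ∀ t ∈ Icc 0 r, K S f t = J 1 (fun s => w s + f s) t := by
  intro t ht
  have hK := K_cont hS hf
  have h1 := main_mem hS (by linarith : 0 < α) A hA hres hf ht.1
  have h2 := J_mem _ hA one_pos ht.1 (J_cont (by linarith : 0 < α - 1) hK) hw
    (fun s hs => h s ⟨hs.1, hs.2.trans ht.2⟩)
  rw [J_J' one_pos (by linarith) (by ring : 1 + (α - 1) = α) hK ht.1] at h2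
  have h3 := A.mem_graph_snd_inj h1 h2 rfl
  rw [J_add one_pos hw hf, ← h3]
  abel

include hα1 hA hS hres hr hf in
lemma b_to_c {D : ℝ → X} (hD : ContinuousOn D (Icc 0 r))
    (h : ∀ t ∈ Icc 0 r, HasDerivWithinAt (K S f) (D t) (Icc 0 r) t) :
    ∃ w : ℝ → X, ContinuousOn w (Icc 0 r) ∧
      ∀ t ∈ Icc 0 r, (J (α - 1) (K S f) t, w t) ∈ A.graph := by
  refine ⟨fun t => D t - f t, hD.sub hf.continuousOn, fun t ht => ?_⟩
  have hK := K_cont hS hf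
  refine deriv_mem _ hA hr ht (J_one_deriv (J_cont (by linarith : 0 < α - 1) hK) ht)
    ((h t ht).sub (J_one_deriv hf ht)) ?_
  intro s hs
  rw [J_J' one_pos (by linarith) (by ring : 1 + (α - 1) = α) hK hs.1]
  exact main_mem hS (by linarith : 0 < α) A hA hres hf hs.1

include hα1 hα2 hA hS hcomm heq hres hr hf in
lemma c_to_a {w : ℝ → X} (hw : Continuous w)
    (h : ∀ t ∈ Icc 0 r, (J (α - 1) (K S f) t, w t) ∈ A.graph)
    {x y B C : X} (hx : (x, B) ∈ A.graph) (hy : (y, C) ∈ A.graph) :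
    ∃ u, IsStrongSolution α A r f x y u := by
  have hα0 : 0 < α := by linarith
  have hα1' : 0 < α - 1 := by linarith
  have hα2' : 0 < 2 - α := by linarith
  have hSc : ∀ z : X, Continuous (fun s => S s z) := fun z => S_cont hS continuous_id continuous_const
  have hKc : ∀ z : X, Continuous (K S (fun _ => z)) := fun z => K_cont hS continuous_const
  have hKf := K_cont hS hf
  have hE := c_to_eq hα1 hA hS hres hw h hf
  set Au : ℝ → X := fun t => S t B + K S (fun _ => C) t + w t with hAu
  have hAuc : Continuous Au := ((hSc B).add (hKc C)).add hw
  set H : ℝ → X := fun t => Au t + f t with hH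
  have hHc : Continuous H := hAuc.add hf
  set u : ℝ → X := fun t => x + t • y + J α H t with hu
  have huc : Continuous u := by
    have := J_cont hα0 hHc
    fun_prop
  have hu2 : ∀ t ∈ Icc 0 r, u t = S t x + K S (fun _ => y) t + J (α - 1) (K S f) t := by
    intro t ht
    have e1 := heq t ht.1 _ _ hx
    have e2 : K S (fun _ => y) t = t • y + J α (K S (fun _ => C)) t := by
      rw [K_const y ht.1, J_congr (h' := fun s => y + J α (fun s => S s C) s) ht.1
        (fun s hs => heq s hs.1 _ _ hy), J_add one_pos continuous_const (J_cont hα0 (hSc C)),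
        J_one_const _ ht.1, J_J one_pos hα0 (hSc C) ht.1, 
        ← J_J' hα0 one_pos (add_comm _ _) (hSc C) ht.1]
      congr 1
      exact J_congr ht.1 (fun s hs => (K_const C hs.1).symm)
    have e3 : J (α - 1) (K S f) t = J α (fun s => w s + f s) t := by
      rw [J_congr ht.1 (fun s hs => hE s ⟨hs.1, hs.2.trans ht.2⟩),
        J_J' hα1' one_pos (by ring) (cadd hw hf) ht.1]
    have e4 : J α H t = J α (fun s => S s B) t + J α (K S (fun _ => C)) t 
        + J α (fun s => w s + f s) t := by
      rw [← J_add hα0 (hSc B) (hKc C), ← J_add hα0 (cadd (hSc B) (hKc C)) (cadd hw hf)]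
      congr 1; ext s; simp only [hH, hAu]; abel
    rw [e1, e2, e3]
    simp only [hu, e4]
    abel
  have hug : ∀ t ∈ Icc 0 r, (u t, Au t) ∈ A.graph := by
    intro t ht
    rw [hu2 t ht]
    exact A.graph.add_mem (A.graph.add_mem (hcomm t ht.1 _ _ hx)
      (K_mem hS _ hA ht.1 continuous_const continuous_const
        (fun s hs => hcomm _ (by linarith [hs.2]) _ _ hy))) (h t ht)
  have hu0 : u 0 = x := by simp [hu, J_zero hα0]
  refine ⟨u, Au, fun t => y + J (α - 1) H t, J 1 H, H, huc.continuousOn, hug, hAuc.continuousOn,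
    ?_, ?_, ?_, ?_, hHc.continuousOn, fun _ _ => rfl, hu0, ?_⟩
  · intro t ht
    have d1 := J_one_deriv (J_cont hα1' hHc) ht
    have d2 : HasDerivWithinAt (fun t : ℝ => x + t • y) y (Icc 0 r) t := by
      have := ((hasDerivAt_id t).smul_const y).const_add x
      simpa using this.hasDerivWithinAt
    refine (d2.add d1).congr (fun s hs => ?_) ?_
    · simp only [hu, Pi.add_apply]
      rw [J_J' one_pos hα1' (by ring : 1 + (α - 1) = α) hHc hs.1]
    · simp only [hu, Pi.add_apply]
      rw [J_J' one_pos hα1' (by ring : 1 + (α - 1) = α) hHc ht.1]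
  · exact (continuous_const.add (J_cont hα1' hHc)).continuousOn
  · have key : ∀ s ∈ Icc 0 r, ∫ σ in (0:ℝ)..s, g (2 - α) (s - σ) • (u σ - x - σ • y)
        = J 1 (J 1 H) s := by
      intro s hs
      rw [← J_eq hα2' (fun σ => u σ - x - σ • y) hs.1]
      have : (fun σ => u σ - x - σ • y) = J α H := by
        ext σ; simp only [hu]; abel
      rw [this, J_J hα2' hα0 hHc hs.1, J_J one_pos one_pos hHc hs.1]
      norm_num
    intro t ht
    exact (J_one_deriv (J_cont one_pos hHc) ht).congr key (key t ht)
  · intro t ht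
    exact J_one_deriv hHc ht
  · simp [J_zero hα1']

include hα1 hα2 hA hS hcomm hres hr hf in
lemma a_to_c {x y B C : X} (hx : (x, B) ∈ A.graph) (hy : (y, C) ∈ A.graph)
    {u : ℝ → X} (hu : IsStrongSolution α A r f x y u) :
    ∃ w : ℝ → X, ContinuousOn w (Icc 0 r) ∧
      ∀ t ∈ Icc 0 r, (J (α - 1) (K S f) t, w t) ∈ A.graph := by
  have hα0 : 0 < α := by linarith
  have hα1' : 0 < α - 1 := by linarith
  have hα2' : 0 < 2 - α := by linarith
  have hSc : ∀ z : X, Continuous (fun s => S s z) := fun z => S_cont hS continuous_id continuous_const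
  have hKc : ∀ z : X, Continuous (K S (fun _ => z)) := fun z => K_cont hS continuous_const
  have hKf := K_cont hS hf
  obtain ⟨Au, u', w', w'', hu1, hug, hAuc, hud, hu'c, hwd, hwd', hw''c, hw'', hu0, hu'0⟩ := hu
  obtain ⟨v, hvc, hv⟩ := exists_ext hr hu1
  obtain ⟨Av, hAvc, hAv⟩ := exists_ext hr hAuc
  obtain ⟨v', hv'c, hv'⟩ := exists_ext hr hu'c
  have h00 : (0:ℝ) ∈ Icc 0 r := ⟨le_rfl, hr.le⟩
  set H : ℝ → X := fun t => Av t + f t with hH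
  have hHc : Continuous H := hAvc.add hf
  set q : ℝ → X := fun t => v' t - y with hq
  have hqc : Continuous q := hv'c.sub continuous_const
  -- u - x - s y = J 1 q
  have s1 : ∀ t ∈ Icc 0 r, u t - x - t • y = J 1 q t := by
    have := eq_J_one (p := fun t => u t - x - t • y) (q := q) (r := r) hqc (by
      intro t ht
      have d2 : HasDerivWithinAt (fun t : ℝ => t • y) y (Icc 0 r) t := by
        simpa using ((hasDerivAt_id t).smul_const y).hasDerivWithinAt (s := Icc 0 r)
      have := ((hud t ht).sub_const x).sub d2
      rw [← hv' t ht] at this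
      exact this)
    intro t ht
    rw [this t ht]
    simp [hu0]
  -- w' = J (2-α) q
  have s2 : ∀ t ∈ Icc 0 r, w' t = J (2 - α) q t := by
    intro t ht
    refine deriv_unique hr ht (hwd t ht) (J_one_deriv (J_cont hα2' hqc) ht) ?_
    intro s hs
    rw [← J_eq hα2' (fun s => u s - x - s • y) hs.1,
      J_congr hs.1 (fun σ hσ => s1 σ ⟨hσ.1, hσ.2.trans hs.2⟩),
      J_J hα2' one_pos hqc hs.1, J_J' one_pos hα2' (add_comm _ _) hqc hs.1]
  have s3 : ∀ t ∈ Icc 0 r, J (2 - α) q t = J 1 H t := by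
    have := eq_J_one (p := w') (q := H) (r := r) hHc (by
      intro t ht
      have := hwd' t ht
      rw [hw'' t ht, ← hAv t ht] at this
      exact this)
    intro t ht
    rw [← s2 t ht, this t ht, s2 0 h00, J_zero hα2', zero_add]
  have s4 : ∀ t ∈ Icc 0 r, v t = x + t • y + J α H t := by
    intro t ht
    have e : J (α - 1) (J (2 - α) q) t = J (α - 1) (J 1 H) t :=
      J_congr ht.1 (fun σ hσ => s3 σ ⟨hσ.1, hσ.2.trans ht.2⟩)
    rw [J_J' hα1' hα2' (by ring : α - 1 + (2 - α) = 1) hqc ht.1,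
      J_J' hα1' one_pos (by ring : α - 1 + 1 = α) hHc ht.1, ← s1 t ht] at e
    rw [hv t ht, ← e]; abel
  -- variation of constants
  have s5 : ∀ t ∈ Icc 0 r, J 1 v t
      = J 1 (fun s => S s x + K S (fun _ => y) s + J (α - 1) (K S f) s) t := by
    intro t ht
    have m1 := main_mem hS hα0 A hA hres hvc ht.1
    have m2 := J_mem _ hA hα0 ht.1 (K_cont hS hvc) (K_cont hS hAvc) (by
      intro s hs
      refine K_mem hS _ hA hs.1 hvc hAvc ?_
      intro σ hσ
      have hσr : σ ∈ Icc 0 r := ⟨hσ.1, hσ.2.trans (hs.2.trans ht.2)⟩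
      refine hcomm _ (by linarith [hσ.2]) _ _ ?_
      rw [hv σ hσr, hAv σ hσr]
      exact hug σ hσr)
    have m3 := A.mem_graph_snd_inj m1 m2 rfl
    have e1 : K S v t = K S (fun _ => x) t + K S (J 1 (fun _ => y)) t + K S (J α H) t := by
      rw [← K_add hS continuous_const (J_cont one_pos continuous_const),
        ← K_add hS (cadd continuous_const (J_cont one_pos continuous_const)) (J_cont hα0 hHc)]
      refine K_congr ht.1 (fun s hs => ?_)
      rw [s4 s ⟨hs.1, hs.2.trans ht.2⟩, J_one_const _ hs.1]
    have e2 : K S (J α H) t = J α (K S Av) t + J α (K S f) t := by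
      rw [K_J hS hα0 ht.1 hHc, ← J_add hα0 (K_cont hS hAvc) hKf]
      exact J_congr ht.1 (fun s hs => K_add hS hAvc hf)
    have e3 : J α (K S f) t = J 1 (J (α - 1) (K S f)) t :=
      (J_J' one_pos hα1' (by ring) hKf ht.1).symm
    rw [J_add one_pos (cadd (hSc x) (hKc y)) (J_cont hα1' hKf), J_add one_pos (hSc x) (hKc y),
      ← e3, ← K_const x ht.1, ← K_J hS one_pos ht.1 continuous_const]
    have e4 : J 1 v t = K S v t - J α (K S Av) t := by rw [← m3]; abel
    rw [e4, e1, e2]; abel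
  have s6 := J_one_inj hvc (cadd (cadd (hSc x) (hKc y)) (J_cont hα1' hKf)) hr s5
  refine ⟨fun t => Av t - (S t B + K S (fun _ => C) t),
    (hAvc.sub ((hSc B).add (hKc C))).continuousOn, fun t ht => ?_⟩
  have e : J (α - 1) (K S f) t = v t - (S t x + K S (fun _ => y) t) := by
    rw [s6 t ht]; abel
  simp only
  rw [e, hv t ht, hAv t ht]
  exact A.graph.sub_mem (hug t ht) (A.graph.add_mem (hcomm t ht.1 _ _ hx)
      (K_mem hS _ hA ht.1 continuous_const continuous_const
        (fun s hs => hcomm _ (by linarith [hs.2]) _ _ hy)))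

end core

end FracAux

theorem stmt_13
    {X : Type*} [NormedAddCommGroup X] [NormedSpace ℂ X] [CompleteSpace X]
    (α : ℝ) (hα1 : 1 < α) (hα2 : α < 2)
    (A : X →ₗ.[ℂ] X) (hA_closed : IsClosed (A.graph : Set (X × X)))
    (hA_dense : Dense (A.domain : Set X))
    (S : ℝ → X →L[ℂ] X)
    (hS_cont : ∀ x : X, ContinuousOn (fun t => S t x) (Ici (0:ℝ)))
    (hS_zero : S 0 = 1)
    (hS_dom : ∀ t : ℝ, 0 ≤ t → ∀ x ∈ A.domain, S t x ∈ A.domain)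
    (hS_comm : ∀ t : ℝ, 0 ≤ t → ∀ x y : X, (x, y) ∈ A.graph → (S t x, S t y) ∈ A.graph)
    (hS_eq : ∀ t : ℝ, 0 ≤ t → ∀ x y : X, (x, y) ∈ A.graph →
      S t x = x + ∫ s in (0:ℝ)..t, g α (t - s) • S s y)
    (r : ℝ) (hr : 0 < r) (f : ℝ → X) (hf : ContinuousOn f (Icc 0 r))
    (x y : X) (hx : x ∈ A.domain) (hy : y ∈ A.domain) :
    List.TFAE
      [ (∃ u : ℝ → X, IsStrongSolution α A r f x y u),
        (∃ D : ℝ → X, ContinuousOn D (Icc 0 r) ∧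
          ∀ t ∈ Icc (0:ℝ) r,
            HasDerivWithinAt (fun τ => ∫ s in (0:ℝ)..τ, S (τ - s) (f s)) (D t) (Icc 0 r) t),
        (∃ w : ℝ → X, ContinuousOn w (Icc 0 r) ∧
          ∀ t ∈ Icc (0:ℝ) r,
            ((∫ s in (0:ℝ)..t, Pa α S (t - s) (f s)), w t) ∈ A.graph) ] := by
  have hα0 : 0 < α := by linarith
  have hα1' : 0 < α - 1 := by linarith
  obtain ⟨F, hFc, hF⟩ := FracAux.exists_ext hr hf
  set T : ℝ → X →L[ℂ] X := fun t => S (max t 0) with hT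
  have hTS : ∀ t, 0 ≤ t → T t = S t := fun t ht => by simp [hT, ht]
  have hTc : Continuous (fun p : ℝ × X => T p.1 p.2) := by
    refine FracAux.joint_cont fun z => ?_
    exact (hS_cont z).comp_continuous (by fun_prop) (fun t => mem_Ici.2 (le_max_right _ _))
  have hcomm : ∀ t : ℝ, 0 ≤ t → ∀ x y : X, (x, y) ∈ A.graph → (T t x, T t y) ∈ A.graph := by
    intro t ht; rw [hTS t ht]; exact hS_comm t ht
  have heq : ∀ t : ℝ, 0 ≤ t → ∀ x y : X, (x, y) ∈ A.graph →
      T t x = x + FracAux.J α (fun s => T s y) t := by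
    intro t ht x y hxy
    rw [hTS t ht, hS_eq t ht x y hxy, FracAux.J_eq hα0 _ ht]
    congr 1
    apply intervalIntegral.integral_congr
    intro s hs
    rw [uIcc_of_le ht] at hs
    simp only [hTS s hs.1]
  have hres : ∀ t : ℝ, 0 ≤ t → ∀ x : X,
      (FracAux.J α (fun s => T s x) t, T t x - x) ∈ A.graph := fun t ht x =>
    FracAux.resolvent_mem hTc hα0 A hA_closed hA_dense hcomm heq ht x
  have hxB : (x, A ⟨x, hx⟩) ∈ A.graph := A.mem_graph ⟨x, hx⟩
  have hyC : (y, A ⟨y, hy⟩) ∈ A.graph := A.mem_graph ⟨y, hy⟩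
  have hK : ∀ t ∈ Icc (0:ℝ) r, ∫ s in (0:ℝ)..t, S (t - s) (f s) = FracAux.K T F t := by
    intro t ht
    apply intervalIntegral.integral_congr
    intro s hs
    rw [uIcc_of_le ht.1] at hs
    simp only [hTS (t - s) (by linarith [hs.2]), hF s ⟨hs.1, hs.2.trans ht.2⟩]
  have hP : ∀ t ∈ Icc (0:ℝ) r, ∫ s in (0:ℝ)..t, Pa α S (t - s) (f s)
      = FracAux.J (α - 1) (FracAux.K T F) t := by
    intro t ht
    rw [FracAux.J_K hTc hα1' ht.1 hFc]
    apply intervalIntegral.integral_congr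
    intro s hs
    rw [uIcc_of_le ht.1] at hs
    have hts : 0 ≤ t - s := by linarith [hs.2]
    simp only [Pa]
    rw [FracAux.J_eq hα1' _ hts]
    apply intervalIntegral.integral_congr
    intro σ hσ
    rw [uIcc_of_le hts] at hσ
    simp only [hTS σ hσ.1, hF s ⟨hs.1, hs.2.trans ht.2⟩]
  have hsol : ∀ p q : ℝ → X, (∀ t ∈ Icc (0:ℝ) r, p t = q t) → ∀ u,
      IsStrongSolution α A r p x y u → IsStrongSolution α A r q x y u := by
    rintro p q hpq u ⟨Au, u', w', w'', h1, h2, h3, h4, h5, h6, h7, h8, h9, h10⟩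
    exact ⟨Au, u', w', w'', h1, h2, h3, h4, h5, h6, h7, h8,
      fun t ht => by rw [h9 t ht, hpq t ht], h10⟩
  tfae_have 1 → 3 := by
    rintro ⟨u, hu⟩
    obtain ⟨w, hw, h⟩ := FracAux.a_to_c hα1 hα2 hA_closed hTc hcomm hres hr hFc hxB hyC
      (hsol f F (fun t ht => (hF t ht).symm) u hu)
    exact ⟨w, hw, fun t ht => by rw [hP t ht]; exact h t ht⟩
  tfae_have 3 → 1 := by
    rintro ⟨w, hw, h⟩
    obtain ⟨W, hWc, hW⟩ := FracAux.exists_ext hr hw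
    obtain ⟨u, hu⟩ := FracAux.c_to_a hα1 hα2 hA_closed hTc hcomm heq hres hr hFc hWc
      (fun t ht => by rw [← hP t ht, hW t ht]; exact h t ht) hxB hyC
    exact ⟨u, hsol F f hF u hu⟩
  tfae_have 3 → 2 := by
    rintro ⟨w, hw, h⟩
    obtain ⟨W, hWc, hW⟩ := FracAux.exists_ext hr hw
    have hE := FracAux.c_to_eq hα1 hA_closed hTc hres hWc
      (fun t ht => by rw [← hP t ht, hW t ht]; exact h t ht) hFc
    refine ⟨fun s => W s + F s, (hWc.add hFc).continuousOn, fun t ht => ?_⟩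
    exact (FracAux.J_one_deriv (hWc.add hFc) ht).congr
      (fun s hs => (hK s hs).trans (hE s hs)) ((hK t ht).trans (hE t ht))
  tfae_have 2 → 3 := by
    rintro ⟨D, hD, h⟩
    obtain ⟨w, hw, h'⟩ := FracAux.b_to_c hα1 hA_closed hTc hres hr hFc hD
      (fun t ht => (h t ht).congr (fun s hs => (hK s hs).symm) (hK t ht).symm)
    exact ⟨w, hw, fun t ht => by rw [hP t ht]; exact h' t ht⟩
  tfae_finish
end
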